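/- arXiv:1609.08743 — 2 statements merged into one kernel-verified Lean document; each statement's English description precedes it below -/
import Mathlib

section
/- Let a₀ ∈ (0,1) be the minimal root of 4a(2−a)(1−a)²(a²−2a+2)² = 1. Let a ∈ [a₀, 1), let c, d > 0 with 0 < c/d ≤ ((a−1)² + 1)/(2(a−1)² + 1), let δ₂ = (√(c/d) − 1)(1−a) < 0, and let δ ∈ (a−1, δ₂]. Then the function G₁(x) = [F(a−1−δ, 1−a+δ; 1; 1−x^d) − F(a−1, 1−a; 1; 1−x^c)]/(1−x^c) is strictly decreasing on (0,1) and maps (0,1) onto (C₃(δ), C₄(δ)), where C₃(δ) = −(d/c)·(δ² + 2(1−a)δ + (1−a)²(1 − c/d)) ≥ 0 and C₄(δ) = (1/π)·[sin(π(a−δ))/(1−a+δ) − sin(πa)/(1−a)]. -/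
open Real Set Filter Topology

/-- The Gaussian hypergeometric function `F(a,b;c;x)`, defined as a power series
with Pochhammer (shifted factorial) coefficients. -/
noncomputable def hyp (a b c x : ℝ) : ℝ :=
  ∑' n : ℕ, ((∏ i ∈ Finset.range n, (a + i)) * (∏ i ∈ Finset.range n, (b + i)) /
    ((∏ i ∈ Finset.range n, (c + i)) * (Nat.factorial n))) * x ^ n

/-
Put `p = 1 - a`, `q = 1 - a + δ`, `r = d / c` and substitute `y = x ^ c`: then `G₁` becomes
`hypDiff p q r y / (1 - y)`, minus the slope of the secant of `hypDiff p q r` through the point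
`(1, 0)`, and it suffices that `hypDiff p q r` is strictly convex. Its second derivative involves
`F(1-q,1+q;2)`, which is estimated below by `F(1-q,1+q;3)`, and leads to the comparison
`y ^ (r - 1) * F(1-q,1+q;3;1-y^r) ≤ F(1-p,1+p;3;1-y)`. The latter holds because
`(1-x) ^ ((a'b'-ab)/(c+1)) * F(a',b';c+1;x) / F(a,b;c+1;x)` is decreasing when
`a + b = a' + b' = c` and `ab ≤ a'b'`, which follows by integrating a differential identity for
the Wronskian of the two functions. What remains is an inequality between coefficients, quadratic
in `r * q ^ 2`; the equation for `a₀`, quartic in `(1 - a₀) ^ 2`, makes it hold up to `p = 1 - a₀`.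
The limits of the quotient are given by `F(-q,q;1;1) = sin (π * q) / (π * q)`, which is Euler's
product for the sine, and by the derivative of `hypDiff p q r` at `1`.
-/

open scoped Nat

lemma mem_eball_zero_one_iff {E : Type*} [SeminormedAddCommGroup E] {x : E} :
    x ∈ Metric.eball (0 : E) 1 ↔ ‖x‖ < 1 := by
  rw [← ENNReal.ofReal_one, Metric.eball_ofReal, mem_ball_zero_iff]

lemma hasSum_deriv_of_hasFPowerSeriesOnBall {𝕜 : Type*} [NontriviallyNormedField 𝕜]
    [CompleteSpace 𝕜] {f : 𝕜 → 𝕜} {p : FormalMultilinearSeries 𝕜 𝕜 𝕜} {x y : 𝕜} {r : ENNReal}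
    (hf : HasFPowerSeriesOnBall f p x r) (hy : y ∈ Metric.eball 0 r) :
    HasSum (fun n => (n + 1) * p.coeff (n + 1) * y ^ n) (deriv f (x + y)) := by
  have := (ContinuousLinearMap.apply 𝕜 𝕜 (1 : 𝕜)).hasSum (hf.fderiv.hasSum hy)
  simpa [FormalMultilinearSeries.derivSeries_coeff_one, mul_comm] using this

section Coefficient

variable {𝕂 : Type*} [Field 𝕂]

lemma ascPochhammer_succ_eval_left (n : ℕ) (x : 𝕂) :
    (ascPochhammer 𝕂 (n + 1)).eval x = x * (ascPochhammer 𝕂 n).eval (x + 1) := by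
  simp [ascPochhammer_succ_left, Polynomial.eval_comp]

lemma ascPochhammer_eval_ne_zero {c : 𝕂} (hc : ∀ k : ℕ, c + k ≠ 0) (n : ℕ) :
    (ascPochhammer 𝕂 n).eval c ≠ 0 := by
  induction n with
  | zero => simp
  | succ n ih => rw [ascPochhammer_succ_eval]; exact mul_ne_zero ih (hc n)

lemma ordinaryHypergeometricCoefficient_zero (a b c : 𝕂) :
    ordinaryHypergeometricCoefficient a b c 0 = 1 := by
  simp [ordinaryHypergeometricCoefficient]

lemma ordinaryHypergeometricCoefficient_succ (a b c : 𝕂) (n : ℕ) :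
    ordinaryHypergeometricCoefficient a b c (n + 1) =
      (a + n) * (b + n) / ((c + n) * (n + 1)) * ordinaryHypergeometricCoefficient a b c n := by
  simp only [ordinaryHypergeometricCoefficient, ascPochhammer_succ_eval, Nat.factorial_succ,
    Nat.cast_mul, Nat.cast_succ, mul_inv, div_eq_mul_inv]
  ring

lemma ordinaryHypergeometricCoefficient_add_one_add_one_add_one [CharZero 𝕂] (a b c : 𝕂) (n : ℕ) :
    a * b / c * ordinaryHypergeometricCoefficient (a + 1) (b + 1) (c + 1) n =
      (n + 1) * ordinaryHypergeometricCoefficient a b c (n + 1) := by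
  have hn : (n + 1 : 𝕂) ≠ 0 := by exact_mod_cast n.succ_ne_zero
  simp only [ordinaryHypergeometricCoefficient, ascPochhammer_succ_eval_left, Nat.factorial_succ,
    Nat.cast_mul, Nat.cast_succ, mul_inv]
  field

lemma ordinaryHypergeometricCoefficient_add_one {c : 𝕂} (hc : ∀ k : ℕ, c + k ≠ 0) (a b : 𝕂)
    (n : ℕ) :
    (c + n) * ordinaryHypergeometricCoefficient a b (c + 1) n =
      c * ordinaryHypergeometricCoefficient a b c n := by
  have eval_ne := ascPochhammer_eval_ne_zero hc n
  have eval_ne' : (ascPochhammer 𝕂 n).eval (c + 1) ≠ 0 :=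
    ascPochhammer_eval_ne_zero (fun k => by simpa [add_assoc, add_comm (k : 𝕂)] using hc (k + 1)) n
  have shift : c * (ascPochhammer 𝕂 n).eval (c + 1) = (ascPochhammer 𝕂 n).eval c * (c + n) := by
    rw [← ascPochhammer_succ_eval_left, ascPochhammer_succ_eval]
  simp only [ordinaryHypergeometricCoefficient]
  field_simp
  linear_combination -(n ! : 𝕂)⁻¹ * (ascPochhammer 𝕂 n).eval a * (ascPochhammer 𝕂 n).eval b * shift

lemma ordinaryHypergeometricCoefficient_add_one_sub [CharZero 𝕂] {a b : 𝕂}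
    (hab : ∀ k : ℕ, a + b + 1 + k ≠ 0) (n : ℕ) :
    ordinaryHypergeometricCoefficient (a + 1) (b + 1) (a + b + 1) (n + 1) -
        ordinaryHypergeometricCoefficient (a + 1) (b + 1) (a + b + 1) n =
      ordinaryHypergeometricCoefficient a b (a + b + 1) (n + 1) := by
  have hn : (n + 1 : 𝕂) ≠ 0 := by exact_mod_cast n.succ_ne_zero
  have coeff_succ : ordinaryHypergeometricCoefficient a b (a + b + 1) (n + 1) =
      a * b / ((a + b + 1 + n) * (n + 1)) *
        ordinaryHypergeometricCoefficient (a + 1) (b + 1) (a + b + 1) n := by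
    simp only [ordinaryHypergeometricCoefficient, ascPochhammer_succ_eval_left n a,
      ascPochhammer_succ_eval_left n b, ascPochhammer_succ_eval, Nat.factorial_succ,
      Nat.cast_mul, Nat.cast_succ, mul_inv, div_eq_mul_inv]
    ring
  rw [coeff_succ, ordinaryHypergeometricCoefficient_succ]
  field [hab n]

lemma sum_ordinaryHypergeometricCoefficient [CharZero 𝕂] {a b : 𝕂}
    (hab : ∀ k : ℕ, a + b + 1 + k ≠ 0) (n : ℕ) :
    ∑ i ∈ Finset.range (n + 1), ordinaryHypergeometricCoefficient a b (a + b + 1) i =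
      ordinaryHypergeometricCoefficient (a + 1) (b + 1) (a + b + 1) n := by
  rw [Finset.sum_range_succ',
    ← Finset.sum_congr rfl fun i _ => ordinaryHypergeometricCoefficient_add_one_sub hab i,
    Finset.sum_range_sub]
  simp only [ordinaryHypergeometricCoefficient_zero, sub_add_cancel]

end Coefficient

section RCLike

variable {𝕂 : Type*} [RCLike 𝕂]

lemma one_le_radius_ordinaryHypergeometricSeries (a b c : 𝕂) :
    1 ≤ (ordinaryHypergeometricSeries 𝕂 a b c).radius := by
  by_cases habc : ∀ k : ℕ, ↑k ≠ -a ∧ ↑k ≠ -b ∧ ↑k ≠ -c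
  · exact (ordinaryHypergeometricSeries_radius_eq_one 𝕂 a b c habc).ge
  · obtain ⟨k, hk⟩ : ∃ k : ℕ, -(k : 𝕂) = a ∨ -(k : 𝕂) = b ∨ -(k : 𝕂) = c := by
      simp only [neg_eq_iff_eq_neg]; grind
    rcases hk with rfl | rfl | rfl
    · simp [ordinaryHypergeometric_radius_top_of_neg_nat₁]
    · simp [ordinaryHypergeometric_radius_top_of_neg_nat₂]
    · simp [ordinaryHypergeometric_radius_top_of_neg_nat₃]

lemma hasFPowerSeriesOnBall_ordinaryHypergeometric (a b c : 𝕂) :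
    HasFPowerSeriesOnBall (₂F₁ a b c) (ordinaryHypergeometricSeries 𝕂 a b c) 0 1 :=
  ((ordinaryHypergeometricSeries 𝕂 a b c).hasFPowerSeriesOnBall
    (one_pos.trans_le (one_le_radius_ordinaryHypergeometricSeries a b c))).mono one_pos
    (one_le_radius_ordinaryHypergeometricSeries a b c)

lemma hasSum_ordinaryHypergeometric (a b c : 𝕂) {x : 𝕂} (hx : ‖x‖ < 1) :
    HasSum (fun n => ordinaryHypergeometricCoefficient a b c n * x ^ n) (₂F₁ a b c x) := by
  have hF := hasFPowerSeriesOnBall_ordinaryHypergeometric a b c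
  have := hF.hasSum (y := x) (mem_eball_zero_one_iff.2 hx)
  simpa only [ordinaryHypergeometricSeries_apply_eq, zero_add, smul_eq_mul] using this

lemma differentiableAt_ordinaryHypergeometric (a b c : 𝕂) {x : 𝕂} (hx : ‖x‖ < 1) :
    DifferentiableAt 𝕂 (₂F₁ a b c) x := by
  have hF := hasFPowerSeriesOnBall_ordinaryHypergeometric a b c
  exact (hF.analyticAt_of_mem (mem_eball_zero_one_iff.2 hx)).differentiableAt

lemma hasSum_deriv_ordinaryHypergeometric (a b c : 𝕂) {x : 𝕂} (hx : ‖x‖ < 1) :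
    HasSum (fun n => (n + 1) * ordinaryHypergeometricCoefficient a b c (n + 1) * x ^ n)
      (deriv (₂F₁ a b c) x) := by
  have hF := hasFPowerSeriesOnBall_ordinaryHypergeometric a b c
  have := hasSum_deriv_of_hasFPowerSeriesOnBall hF (mem_eball_zero_one_iff.2 hx)
  simpa only [ordinaryHypergeometricSeries, FormalMultilinearSeries.coeff_ofScalars,
    zero_add] using this

lemma hasDerivAt_ordinaryHypergeometric (a b c : 𝕂) {x : 𝕂} (hx : ‖x‖ < 1) :
    HasDerivAt (₂F₁ a b c) (a * b / c * ₂F₁ (a + 1) (b + 1) (c + 1) x) x := by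
  have hshift := (hasSum_ordinaryHypergeometric (a + 1) (b + 1) (c + 1) hx).mul_left (a * b / c)
  have hterm (n : ℕ) :
      a * b / c * (ordinaryHypergeometricCoefficient (a + 1) (b + 1) (c + 1) n * x ^ n) =
        (n + 1) * ordinaryHypergeometricCoefficient a b c (n + 1) * x ^ n := by
    rw [← ordinaryHypergeometricCoefficient_add_one_add_one_add_one, mul_assoc (a * b / c)]
  simp_rw [hterm] at hshift
  exact (hasSum_deriv_ordinaryHypergeometric a b c hx).unique hshift ▸
    (differentiableAt_ordinaryHypergeometric a b c hx).hasDerivAt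

lemma one_sub_mul_ordinaryHypergeometric {a b : 𝕂} (hab : ∀ k : ℕ, a + b + 1 + k ≠ 0) {x : 𝕂}
    (hx : ‖x‖ < 1) :
    (1 - x) * ₂F₁ (a + 1) (b + 1) (a + b + 1) x = ₂F₁ a b (a + b + 1) x := by
  have hF := hasSum_ordinaryHypergeometric (a + 1) (b + 1) (a + b + 1) hx
  have htail := (hasSum_nat_add_iff' 1).2 hF
  have hdiff := htail.sub (hF.mul_left x)
  have hG := (hasSum_nat_add_iff' 1).2 (hasSum_ordinaryHypergeometric a b (a + b + 1) hx)
  have hterm (n : ℕ) :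
      ordinaryHypergeometricCoefficient a b (a + b + 1) (n + 1) * x ^ (n + 1) =
        ordinaryHypergeometricCoefficient (a + 1) (b + 1) (a + b + 1) (n + 1) * x ^ (n + 1) -
          x * (ordinaryHypergeometricCoefficient (a + 1) (b + 1) (a + b + 1) n * x ^ n) := by
    rw [← ordinaryHypergeometricCoefficient_add_one_sub hab]
    ring
  simp_rw [hterm] at hG
  have := hG.unique hdiff
  simp only [Finset.sum_range_one, ordinaryHypergeometricCoefficient_zero, pow_zero, mul_one]
    at this
  linear_combination -this

lemma hasDerivAt_ordinaryHypergeometric_contiguous {c : 𝕂} (hc : ∀ k : ℕ, c + k ≠ 0) (a b : 𝕂)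
    {x : 𝕂} (hx₀ : x ≠ 0) (hx : ‖x‖ < 1) :
    HasDerivAt (₂F₁ a b (c + 1)) (c * (₂F₁ a b c x - ₂F₁ a b (c + 1) x) / x) x := by
  have heuler : HasSum
      (fun n => n * ordinaryHypergeometricCoefficient a b (c + 1) n * x ^ n)
      (x * deriv (₂F₁ a b (c + 1)) x) := by
    have hterm (n : ℕ) :
        (n + 1 : ℕ) * ordinaryHypergeometricCoefficient a b (c + 1) (n + 1) * x ^ (n + 1) =
          x * ((n + 1) * ordinaryHypergeometricCoefficient a b (c + 1) (n + 1) * x ^ n) := by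
      push_cast
      ring
    rw [← hasSum_nat_add_iff' 1]
    simp_rw [hterm]
    simpa only [Finset.sum_range_one, Nat.cast_zero, zero_mul, sub_zero] using
      (hasSum_deriv_ordinaryHypergeometric a b (c + 1) hx).mul_left x
  have hdiff := ((hasSum_ordinaryHypergeometric a b c hx).sub
    (hasSum_ordinaryHypergeometric a b (c + 1) hx)).mul_left c
  have hterm (n : ℕ) : n * ordinaryHypergeometricCoefficient a b (c + 1) n * x ^ n =
      c * (ordinaryHypergeometricCoefficient a b c n * x ^ n -
        ordinaryHypergeometricCoefficient a b (c + 1) n * x ^ n) := by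
    linear_combination x ^ n * ordinaryHypergeometricCoefficient_add_one hc a b n
  simp_rw [hterm] at heuler
  rw [hdiff.unique heuler, mul_div_cancel_left₀ _ hx₀]
  exact (differentiableAt_ordinaryHypergeometric a b (c + 1) hx).hasDerivAt

end RCLike

section Real

variable {a b c x : ℝ}

lemma hyp_eq_ordinaryHypergeometric (a b c x : ℝ) : hyp a b c x = ₂F₁ a b c x := by
  have prod_eq (t : ℝ) (n : ℕ) : ∏ i ∈ Finset.range n, (t + i) = (ascPochhammer ℝ n).eval t := by
    induction n with
    | zero => simp
    | succ n ih => rw [Finset.prod_range_succ, ih, ascPochhammer_succ_eval]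
  rw [hyp, ordinaryHypergeometric_eq_tsum]
  refine tsum_congr fun n => ?_
  rw [prod_eq, prod_eq, prod_eq, smul_eq_mul]
  ring

lemma tendsto_ordinaryHypergeometric_nhdsLT_one {l : ℝ} (hab : ∀ k : ℕ, a + b + 1 + k ≠ 0)
    (h : Tendsto (ordinaryHypergeometricCoefficient (a + 1) (b + 1) (a + b + 1)) atTop (𝓝 l)) :
    Tendsto (₂F₁ a b (a + b + 1) : ℝ → ℝ) (𝓝[<] 1) (𝓝 l) := by
  rw [ordinaryHypergeometric_eq_tsum]
  refine Real.tendsto_tsum_powerSeries_nhdsWithin_lt ((tendsto_add_atTop_iff_nat 1).1 ?_)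
  simpa only [sum_ordinaryHypergeometricCoefficient hab] using h

lemma ordinaryHypergeometricCoefficient_one_sub_one_add (p : ℝ) (n : ℕ) :
    ordinaryHypergeometricCoefficient (1 - p) (1 + p) 1 n =
      ∏ i ∈ Finset.range n, (1 - p ^ 2 / ((i : ℝ) + 1) ^ 2) := by
  induction n with
  | zero => simp [ordinaryHypergeometricCoefficient_zero]
  | succ n ih =>
    rw [ordinaryHypergeometricCoefficient_succ, ih, Finset.prod_range_succ]
    field

lemma tendsto_ordinaryHypergeometric_neg_self {p : ℝ} (hp : p ≠ 0) :
    Tendsto (₂F₁ (-p) p 1 : ℝ → ℝ) (𝓝[<] 1) (𝓝 (sin (π * p) / (π * p))) := by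
  have hcoeff : Tendsto (ordinaryHypergeometricCoefficient (1 - p) (1 + p) 1) atTop
      (𝓝 (sin (π * p) / (π * p))) := by
    refine ((Real.tendsto_euler_sin_prod p).div_const (π * p)).congr fun n => ?_
    rw [ordinaryHypergeometricCoefficient_one_sub_one_add,
      mul_div_cancel_left₀ _ (mul_ne_zero pi_ne_zero hp)]
  have hparam : -p + p + 1 = 1 := by ring
  have := tendsto_ordinaryHypergeometric_nhdsLT_one (a := -p) (b := p)
    (by intro k; rw [hparam]; positivity)
    (by rwa [hparam, neg_add_eq_sub, add_comm p])
  rwa [hparam] at this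

lemma ordinaryHypergeometricCoefficient_nonneg (ha : 0 ≤ a) (hb : 0 ≤ b) (hc : 0 ≤ c) (n : ℕ) :
    0 ≤ ordinaryHypergeometricCoefficient a b c n := by
  induction n with
  | zero => simp [ordinaryHypergeometricCoefficient_zero]
  | succ n ih => rw [ordinaryHypergeometricCoefficient_succ]; positivity

lemma norm_lt_one_of_mem_Ico (hx : x ∈ Ico 0 1) : ‖x‖ < 1 := by
  rw [norm_eq_abs, abs_of_nonneg hx.1]
  exact hx.2

lemma one_le_ordinaryHypergeometric (ha : 0 ≤ a) (hb : 0 ≤ b) (hc : 0 ≤ c) (hx : x ∈ Ico 0 1) :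
    1 ≤ ₂F₁ a b c x := by
  have hterm (n : ℕ) : 0 ≤ ordinaryHypergeometricCoefficient a b c n * x ^ n :=
    mul_nonneg (ordinaryHypergeometricCoefficient_nonneg ha hb hc n) (pow_nonneg hx.1 n)
  simpa [ordinaryHypergeometricCoefficient_zero] using
    le_hasSum (hasSum_ordinaryHypergeometric a b c (norm_lt_one_of_mem_Ico hx)) 0 fun n _ => hterm n

lemma ordinaryHypergeometric_pos (ha : 0 ≤ a) (hb : 0 ≤ b) (hc : 0 ≤ c) (hx : x ∈ Ico 0 1) :
    0 < ₂F₁ a b c x :=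
  one_pos.trans_le (one_le_ordinaryHypergeometric ha hb hc hx)

lemma ordinaryHypergeometric_add_one_lt (ha : 0 < a) (hb : 0 < b) (hc : 0 < c)
    (hx : x ∈ Ioo 0 1) : ₂F₁ a b (c + 1) x < ₂F₁ a b c x := by
  have hx' := Ioo_subset_Ico_self hx
  have hnorm := norm_lt_one_of_mem_Ico hx'
  have hderiv := (hasDerivAt_ordinaryHypergeometric_contiguous (fun k => by positivity) a b
    hx.1.ne' hnorm).unique (hasDerivAt_ordinaryHypergeometric a b (c + 1) hnorm)
  have hF : 0 < ₂F₁ (a + 1) (b + 1) (c + 1 + 1) x :=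
    ordinaryHypergeometric_pos (by positivity) (by positivity) (by positivity) hx'
  have hpos : 0 < c * (₂F₁ a b c x - ₂F₁ a b (c + 1) x) / x := by
    rw [hderiv]
    positivity
  rw [div_pos_iff_of_pos_right hx.1, mul_pos_iff_of_pos_left hc] at hpos
  exact sub_pos.1 hpos

lemma ordinaryHypergeometric_zero_left (b c x : ℝ) : ₂F₁ 0 b c x = 1 := by
  rw [ordinaryHypergeometric, ordinaryHypergeometric_sum_eq, tsum_eq_single 0]
  · simp
  · intro n hn
    simp [hn]

end Real

lemma hasDerivAt_ordinaryHypergeometric_of_add_eq {𝕂 : Type*} [RCLike 𝕂] {a b c x : 𝕂}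
    (hab : a + b = c) (hc : ∀ k : ℕ, c + k ≠ 0) (hx : ‖x‖ < 1) :
    HasDerivAt (₂F₁ a b c) (a * b / c * (₂F₁ a b (c + 1) x / (1 - x))) x := by
  subst hab
  have hx₁ : 1 - x ≠ 0 := sub_ne_zero.2 (by rintro rfl; simp at hx)
  have hc' (k : ℕ) : a + b + 1 + k ≠ 0 := by simpa [add_assoc, add_comm (k : 𝕂)] using hc (k + 1)
  rw [← one_sub_mul_ordinaryHypergeometric hc' hx, mul_div_cancel_left₀ _ hx₁]
  exact hasDerivAt_ordinaryHypergeometric a b (a + b) hx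

/-- The determinant of contiguous functions that equals, up to the factor `x / c`, the Wronskian of
`F(a,b;c+1)` and `F(a',b';c+1)`; its size controls the ratio of these two functions. -/
noncomputable def contiguousWronskian (a b a' b' c x : ℝ) : ℝ :=
  ₂F₁ a' b' c x * ₂F₁ a b (c + 1) x - ₂F₁ a b c x * ₂F₁ a' b' (c + 1) x

section Wronskian

variable {a b a' b' c x : ℝ}

lemma hasDerivAt_rpow_mul_contiguousWronskian (hc : 0 < c) (hab : a + b = c) (hab' : a' + b' = c)
    (hx : x ∈ Ioo 0 1) :
    HasDerivAt (fun x => x ^ c * contiguousWronskian a b a' b' c x)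
      ((a' * b' - a * b) / c *
        (x ^ c * (₂F₁ a b (c + 1) x * ₂F₁ a' b' (c + 1) x) / (1 - x))) x := by
  have hx₀ : x ≠ 0 := hx.1.ne'
  have hx₁ : 1 - x ≠ 0 := (sub_pos.2 hx.2).ne'
  have hnorm : ‖x‖ < 1 := norm_lt_one_of_mem_Ico (Ioo_subset_Ico_self hx)
  have hck (k : ℕ) : c + k ≠ 0 := by positivity
  have hB := hasDerivAt_ordinaryHypergeometric_of_add_eq hab hck hnorm
  have hB' := hasDerivAt_ordinaryHypergeometric_of_add_eq hab' hck hnorm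
  have hA := hasDerivAt_ordinaryHypergeometric_contiguous hck a b hx₀ hnorm
  have hA' := hasDerivAt_ordinaryHypergeometric_contiguous hck a' b' hx₀ hnorm
  refine ((Real.hasDerivAt_rpow_const (p := c) (Or.inl hx₀)).mul
    ((hB'.mul hA).sub (hB.mul hA'))).congr_deriv ?_
  simp only [Pi.sub_apply, Pi.mul_apply, rpow_sub_one hx₀]
  field

lemma continuousOn_ordinaryHypergeometric (a b c : ℝ) :
    ContinuousOn (₂F₁ a b c : ℝ → ℝ) (Ico 0 1) := fun _ hx =>
  (differentiableAt_ordinaryHypergeometric a b c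
    (norm_lt_one_of_mem_Ico hx)).continuousAt.continuousWithinAt

lemma deriv_ordinaryHypergeometric_nonneg (ha : 0 ≤ a) (hb : 0 ≤ b) (hc : 0 ≤ c)
    (hx : x ∈ Ico 0 1) : 0 ≤ deriv (₂F₁ a b c) x := by
  have hnorm : ‖x‖ < 1 := norm_lt_one_of_mem_Ico hx
  rw [(hasDerivAt_ordinaryHypergeometric a b c hnorm).deriv]
  have := ordinaryHypergeometric_pos (add_nonneg ha one_pos.le) (add_nonneg hb one_pos.le)
    (add_nonneg hc one_pos.le) hx
  positivity

lemma hasDerivAt_rpow_mul_div_one_sub {P : ℝ → ℝ} {P' : ℝ} (hP : HasDerivAt P P' x)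
    (c : ℝ) (hx : x ∈ Ioo 0 1) :
    HasDerivAt (fun x => x ^ (c + 1) * (P x / (1 - x)))
      ((c + 1) * (x ^ c * P x / (1 - x)) + x ^ (c + 1) * (P' / (1 - x) + P x / (1 - x) ^ 2)) x := by
  have hx₁ : 1 - x ≠ 0 := (sub_pos.2 hx.2).ne'
  refine ((Real.hasDerivAt_rpow_const (p := c + 1) (Or.inl hx.1.ne')).mul
    (hP.div ((hasDerivAt_id x).const_sub 1) hx₁)).congr_deriv ?_
  simp only [id, add_sub_cancel_right, Pi.div_apply]
  field

lemma monotoneOn_contiguousWronskian_gap (ha : 0 ≤ a) (hb : 0 ≤ b) (ha' : 0 ≤ a') (hb' : 0 ≤ b')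
    (hc : 0 < c) (hab : a + b = c) (hab' : a' + b' = c) (hle : a * b ≤ a' * b') :
    MonotoneOn (fun x => (a' * b' - a * b) / (c * (c + 1)) *
        (x ^ (c + 1) * (₂F₁ a b (c + 1) x * ₂F₁ a' b' (c + 1) x / (1 - x))) -
      x ^ c * contiguousWronskian a b a' b' c x) (Ico 0 1) := by
  set k := (a' * b' - a * b) / (c * (c + 1)) with hk
  have hk₀ : 0 ≤ k := div_nonneg (sub_nonneg.2 hle) (by positivity)
  let A : ℝ → ℝ := ₂F₁ a b (c + 1)
  let A' : ℝ → ℝ := ₂F₁ a' b' (c + 1)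
  have hF (a b c : ℝ) := continuousOn_ordinaryHypergeometric a b c
  have hrpow {e : ℝ} (he : 0 < e) : ContinuousOn (fun x : ℝ => x ^ e) (Ico 0 1) :=
    continuousOn_id.rpow_const fun _ _ => Or.inr he.le
  have hne : ∀ x ∈ Ico (0 : ℝ) 1, 1 - x ≠ 0 := fun x hx => (sub_pos.2 hx.2).ne'
  refine monotoneOn_of_hasDerivWithinAt_nonneg (convex_Ico 0 1)
    (f' := fun x => k * (x ^ (c + 1) * ((deriv A x * A' x + A x * deriv A' x) / (1 - x) +
      A x * A' x / (1 - x) ^ 2))) ?_ ?_ ?_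
  · exact (continuousOn_const.mul ((hrpow (by positivity)).mul
      (((hF _ _ _).mul (hF _ _ _)).div (by fun_prop) hne))).sub
        ((hrpow hc).mul (((hF _ _ _).mul (hF _ _ _)).sub ((hF _ _ _).mul (hF _ _ _))))
  · rw [interior_Ico]
    intro x hx
    have hnorm : ‖x‖ < 1 := norm_lt_one_of_mem_Ico (Ioo_subset_Ico_self hx)
    have hA : HasDerivAt A (deriv A x) x :=
      (differentiableAt_ordinaryHypergeometric a b (c + 1) hnorm).hasDerivAt
    have hA' : HasDerivAt A' (deriv A' x) x :=
      (differentiableAt_ordinaryHypergeometric a' b' (c + 1) hnorm).hasDerivAt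
    refine ((((hasDerivAt_rpow_mul_div_one_sub (hA.mul hA') c hx).const_mul k).sub
      (hasDerivAt_rpow_mul_contiguousWronskian hc hab hab' hx)).congr_deriv ?_).hasDerivWithinAt
    simp only [Pi.mul_apply, hk, A, A']
    field
  · rw [interior_Ico]
    intro x hx
    have hx' := Ioo_subset_Ico_self hx
    have hA := ordinaryHypergeometric_pos ha hb (add_nonneg hc.le one_pos.le) hx'
    have hA' := ordinaryHypergeometric_pos ha' hb' (add_nonneg hc.le one_pos.le) hx'
    have hdA := deriv_ordinaryHypergeometric_nonneg ha hb (add_nonneg hc.le one_pos.le) hx'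
    have hdA' := deriv_ordinaryHypergeometric_nonneg ha' hb' (add_nonneg hc.le one_pos.le) hx'
    have := sub_pos.2 hx.2
    have := hx.1
    simp only [A, A']
    exact mul_nonneg hk₀ (by positivity)

lemma contiguousWronskian_le (ha : 0 ≤ a) (hb : 0 ≤ b) (ha' : 0 ≤ a') (hb' : 0 ≤ b') (hc : 0 < c)
    (hab : a + b = c) (hab' : a' + b' = c) (hle : a * b ≤ a' * b') (hx : x ∈ Ioo 0 1) :
    contiguousWronskian a b a' b' c x ≤ (a' * b' - a * b) / (c * (c + 1)) *
      (x * (₂F₁ a b (c + 1) x * ₂F₁ a' b' (c + 1) x) / (1 - x)) := by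
  have hgap := monotoneOn_contiguousWronskian_gap ha hb ha' hb' hc hab hab' hle
    (left_mem_Ico.2 one_pos) (Ioo_subset_Ico_self hx) hx.1.le
  have hxc := rpow_pos_of_pos hx.1 c
  simp only [zero_rpow hc.ne', zero_rpow (by positivity : c + 1 ≠ 0), rpow_add_one hx.1.ne',
    zero_mul, mul_zero, sub_zero] at hgap
  refine le_of_mul_le_mul_left ?_ hxc
  linear_combination hgap

lemma hasDerivAt_log_sub_log_ordinaryHypergeometric (ha : 0 ≤ a) (hb : 0 ≤ b) (ha' : 0 ≤ a')
    (hb' : 0 ≤ b') (hc : 0 < c) (hx : x ∈ Ioo 0 1) :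
    HasDerivAt (fun x => log (₂F₁ a' b' (c + 1) x) - log (₂F₁ a b (c + 1) x))
      (c * contiguousWronskian a b a' b' c x /
        (x * (₂F₁ a b (c + 1) x * ₂F₁ a' b' (c + 1) x))) x := by
  have hx' := Ioo_subset_Ico_self hx
  have hx₀ : x ≠ 0 := hx.1.ne'
  have hck (k : ℕ) : c + k ≠ 0 := by positivity
  have hA := ordinaryHypergeometric_pos ha hb (add_nonneg hc.le one_pos.le) hx'
  have hA' := ordinaryHypergeometric_pos ha' hb' (add_nonneg hc.le one_pos.le) hx'
  have hdA := hasDerivAt_ordinaryHypergeometric_contiguous hck a b hx₀ (norm_lt_one_of_mem_Ico hx')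
  have hdA' :=
    hasDerivAt_ordinaryHypergeometric_contiguous hck a' b' hx₀ (norm_lt_one_of_mem_Ico hx')
  refine ((hdA'.log hA'.ne').sub (hdA.log hA.ne')).congr_deriv ?_
  rw [contiguousWronskian]
  field

lemma antitoneOn_log_ordinaryHypergeometric_sub (ha : 0 ≤ a) (hb : 0 ≤ b) (ha' : 0 ≤ a')
    (hb' : 0 ≤ b') (hc : 0 < c) (hab : a + b = c) (hab' : a' + b' = c) (hle : a * b ≤ a' * b') :
    AntitoneOn (fun x => (a' * b' - a * b) / (c + 1) * log (1 - x) +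
      (log (₂F₁ a' b' (c + 1) x) - log (₂F₁ a b (c + 1) x))) (Ico 0 1) := by
  have hc₁ : 0 ≤ c + 1 := by positivity
  have hone_sub {x : ℝ} (hx : x ∈ Ico 0 1) : 0 < 1 - x := sub_pos.2 hx.2
  refine antitoneOn_of_hasDerivWithinAt_nonpos (convex_Ico 0 1)
    (f' := fun x => (a' * b' - a * b) / (c + 1) * (-1 / (1 - x)) +
      c * contiguousWronskian a b a' b' c x / (x * (₂F₁ a b (c + 1) x * ₂F₁ a' b' (c + 1) x)))
    ?_ ?_ ?_
  · have hF (a b : ℝ) := continuousOn_ordinaryHypergeometric a b (c + 1)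
    exact (continuousOn_const.mul
      ((continuousOn_const.sub continuousOn_id).log fun x hx => (hone_sub hx).ne')).add
        (((hF _ _).log fun x hx => (ordinaryHypergeometric_pos ha' hb' hc₁ hx).ne').sub
          ((hF _ _).log fun x hx => (ordinaryHypergeometric_pos ha hb hc₁ hx).ne'))
  · rw [interior_Ico]
    intro x hx
    exact (((((hasDerivAt_id x).const_sub 1).log (hone_sub (Ioo_subset_Ico_self hx)).ne').const_mul
      _).add (hasDerivAt_log_sub_log_ordinaryHypergeometric ha hb ha' hb' hc hx)).hasDerivWithinAt
  · rw [interior_Ico]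
    intro x hx
    have hx' := Ioo_subset_Ico_self hx
    have hA := ordinaryHypergeometric_pos ha hb hc₁ hx'
    have hA' := ordinaryHypergeometric_pos ha' hb' hc₁ hx'
    have hW := contiguousWronskian_le ha hb ha' hb' hc hab hab' hle hx
    have hx₁ := hone_sub hx'
    have hx₀ := hx.1
    calc _ ≤ (a' * b' - a * b) / (c + 1) * (-1 / (1 - x)) +
          c * ((a' * b' - a * b) / (c * (c + 1)) *
            (x * (₂F₁ a b (c + 1) x * ₂F₁ a' b' (c + 1) x) / (1 - x))) /
              (x * (₂F₁ a b (c + 1) x * ₂F₁ a' b' (c + 1) x)) := by gcongr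
      _ = 0 := by field

lemma antitoneOn_rpow_mul_ordinaryHypergeometric_div (ha : 0 ≤ a) (hb : 0 ≤ b) (ha' : 0 ≤ a')
    (hb' : 0 ≤ b') (hc : 0 < c) (hab : a + b = c) (hab' : a' + b' = c) (hle : a * b ≤ a' * b') :
    AntitoneOn (fun x : ℝ => (1 - x) ^ ((a' * b' - a * b) / (c + 1)) *
      (₂F₁ a' b' (c + 1) x / ₂F₁ a b (c + 1) x)) (Ico 0 1) := by
  have hc₁ : 0 ≤ c + 1 := by positivity
  refine (exp_monotone.comp_antitoneOn (antitoneOn_log_ordinaryHypergeometric_sub ha hb ha' hb' hc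
    hab hab' hle)).congr fun x hx => ?_
  have hA := ordinaryHypergeometric_pos ha hb hc₁ hx
  have hA' := ordinaryHypergeometric_pos ha' hb' hc₁ hx
  rw [Function.comp_apply, exp_add, exp_sub, exp_log hA, exp_log hA', mul_comm _ (log _),
    rpow_def_of_pos (sub_pos.2 hx.2)]

end Wronskian

section Comparison

variable {a b a' b' c x y r : ℝ}

lemma rpow_mul_ordinaryHypergeometric_le (ha : 0 ≤ a) (hb : 0 ≤ b) (ha' : 0 ≤ a')
    (hb' : 0 ≤ b') (hc : 0 < c) (hab : a + b = c) (hab' : a' + b' = c) (hle : a * b ≤ a' * b')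
    (hx : x ∈ Ico 0 1) :
    (1 - x) ^ ((a' * b' - a * b) / (c + 1)) * ₂F₁ a' b' (c + 1) x ≤ ₂F₁ a b (c + 1) x := by
  have hA := ordinaryHypergeometric_pos ha hb (add_nonneg hc.le one_pos.le) hx
  have := antitoneOn_rpow_mul_ordinaryHypergeometric_div ha hb ha' hb' hc hab hab' hle
    (left_mem_Ico.2 one_pos) hx hx.1
  simpa [← mul_div_assoc, div_le_one hA] using this

lemma antitoneOn_rpow_mul_ordinaryHypergeometric (ha : 0 ≤ a) (hb : 0 ≤ b) (hc : 0 < c)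
    (hab : a + b = c) :
    AntitoneOn (fun x : ℝ => (1 - x) ^ (a * b / (c + 1)) * ₂F₁ a b (c + 1) x) (Ico 0 1) := by
  simpa [ordinaryHypergeometric_zero_left] using
    antitoneOn_rpow_mul_ordinaryHypergeometric_div le_rfl hc.le ha hb hc (zero_add c) hab
      (by simpa using mul_nonneg ha hb)

lemma rpow_mul_ordinaryHypergeometric_one_sub_rpow_le (ha : 0 ≤ a) (hb : 0 ≤ b) (ha' : 0 ≤ a')
    (hb' : 0 ≤ b') (hc : 0 < c) (hab : a + b = c) (hab' : a' + b' = c) (hle : a * b ≤ a' * b')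
    (hr : 1 ≤ r) (hy : y ∈ Ioc 0 1) :
    y ^ ((r * (a' * b') - a * b) / (c + 1)) * ₂F₁ a' b' (c + 1) (1 - y ^ r) ≤
      ₂F₁ a b (c + 1) (1 - y) := by
  have hy₀ := hy.1
  have hyr : y ^ r ≤ y := by simpa using rpow_le_rpow_of_exponent_ge hy.1 hy.2 hr
  have hx : 1 - y ∈ Ico 0 1 := ⟨by linarith [hy.2], by linarith⟩
  have hxr : 1 - y ^ r ∈ Ico 0 1 := ⟨by linarith [hy.2], by linarith [rpow_pos_of_pos hy₀ r]⟩
  set k := a * b / (c + 1)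
  set k' := a' * b' / (c + 1)
  have hanti : y ^ (r * k') * ₂F₁ a' b' (c + 1) (1 - y ^ r) ≤
      y ^ k' * ₂F₁ a' b' (c + 1) (1 - y) := by
    have := antitoneOn_rpow_mul_ordinaryHypergeometric ha' hb' hc hab' hx hxr (by linarith)
    simpa only [sub_sub_cancel, ← rpow_mul hy₀.le] using this
  calc y ^ ((r * (a' * b') - a * b) / (c + 1)) * ₂F₁ a' b' (c + 1) (1 - y ^ r)
      = y ^ (-k) * (y ^ (r * k') * ₂F₁ a' b' (c + 1) (1 - y ^ r)) := by
        rw [← mul_assoc (y ^ (-k)), ← rpow_add hy₀]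
        congr 2
        ring
    _ ≤ y ^ (-k) * (y ^ k' * ₂F₁ a' b' (c + 1) (1 - y)) := by gcongr
    _ = (1 - (1 - y)) ^ ((a' * b' - a * b) / (c + 1)) * ₂F₁ a' b' (c + 1) (1 - y) := by
        rw [← mul_assoc (y ^ (-k)), ← rpow_add hy₀, sub_sub_cancel]
        congr 2
        ring
    _ ≤ ₂F₁ a b (c + 1) (1 - y) :=
        rpow_mul_ordinaryHypergeometric_le ha hb ha' hb' hc hab hab' hle hx

end Comparison

section HypDiff

variable {p q r y : ℝ}

lemma one_sub_rpow_mem_Ico (hr : 0 ≤ r) (hy : y ∈ Ioc 0 1) : 1 - y ^ r ∈ Ico 0 1 :=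
  ⟨sub_nonneg.2 (rpow_le_one hy.1.le hy.2 hr), sub_lt_self _ (rpow_pos_of_pos hy.1 r)⟩

lemma hasDerivAt_one_sub_rpow (r : ℝ) (hy : 0 < y) :
    HasDerivAt (fun y : ℝ => 1 - y ^ r) (-(r * y ^ (r - 1))) y :=
  (Real.hasDerivAt_rpow_const (Or.inl hy.ne')).const_sub 1

lemma hasDerivAt_ordinaryHypergeometric_neg_self_one_sub_rpow (q : ℝ) (hr : 0 ≤ r)
    (hy : y ∈ Ioc 0 1) :
    HasDerivAt (fun y : ℝ => ₂F₁ (-q) q 1 (1 - y ^ r))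
      (r * q ^ 2 * (y ^ (r - 1) * ₂F₁ (1 - q) (1 + q) 2 (1 - y ^ r))) y := by
  refine ((hasDerivAt_ordinaryHypergeometric (-q) q 1 (norm_lt_one_of_mem_Ico
    (one_sub_rpow_mem_Ico hr hy))).comp y (hasDerivAt_one_sub_rpow r hy.1)).congr_deriv ?_
  rw [neg_add_eq_sub, add_comm q, one_add_one_eq_two]
  ring

lemma hasDerivAt_rpow_mul_ordinaryHypergeometric_one_sub_rpow (q : ℝ) (hr : 0 ≤ r)
    (hy : y ∈ Ioc 0 1) :
    HasDerivAt (fun y : ℝ => y ^ (r - 1) * ₂F₁ (1 - q) (1 + q) 2 (1 - y ^ r))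
      (y ^ (r - 1) * ((r - 1) * ₂F₁ (1 - q) (1 + q) 2 (1 - y ^ r) -
        r * (1 - q ^ 2) / 2 * ₂F₁ (1 - q) (1 + q) 3 (1 - y ^ r)) / y) y := by
  have hy₀ : y ≠ 0 := hy.1.ne'
  have hyr : y ^ r ≠ 0 := (rpow_pos_of_pos hy.1 r).ne'
  have hF := hasDerivAt_ordinaryHypergeometric_of_add_eq (a := 1 - q) (b := 1 + q) (c := 2)
    (by ring) (fun k => by positivity) (norm_lt_one_of_mem_Ico (one_sub_rpow_mem_Ico hr hy))
  rw [two_add_one_eq_three, sub_sub_cancel] at hF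
  have hcomp : HasDerivAt (fun y : ℝ => ₂F₁ (1 - q) (1 + q) 2 (1 - y ^ r)) _ y :=
    hF.comp y (hasDerivAt_one_sub_rpow r hy.1)
  refine ((Real.hasDerivAt_rpow_const (p := r - 1) (Or.inl hy₀)).mul hcomp).congr_deriv ?_
  rw [rpow_sub_one hy₀ (r - 1), rpow_sub_one hy₀]
  field

lemma rpow_mul_ordinaryHypergeometric_one_sub_one_add_le (hp : 0 ≤ p) (hp₁ : p ≤ 1) (hq : 0 ≤ q)
    (hqp : q ≤ p) (hr : 1 ≤ r) (hpr : p ^ 2 ≤ 2 * (r - 1) + r * q ^ 2) (hy : y ∈ Ioc 0 1) :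
    y ^ (r - 1) * ₂F₁ (1 - q) (1 + q) 3 (1 - y ^ r) ≤ ₂F₁ (1 - p) (1 + p) 3 (1 - y) := by
  have hcomp := rpow_mul_ordinaryHypergeometric_one_sub_rpow_le (a := 1 - p) (b := 1 + p)
    (a' := 1 - q) (b' := 1 + q) (c := 2) (by linarith) (by linarith) (by linarith) (by linarith)
    two_pos (by ring) (by ring) (by nlinarith) hr hy
  rw [two_add_one_eq_three] at hcomp
  have hA := ordinaryHypergeometric_pos (a := 1 - q) (b := 1 + q) (c := 3) (by linarith)
    (by linarith) (by norm_num) (one_sub_rpow_mem_Ico (zero_le_one.trans hr) hy)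
  refine le_trans (mul_le_mul_of_nonneg_right ?_ hA.le) hcomp
  exact rpow_le_rpow_of_exponent_ge hy.1 hy.2 (by linarith)

/-- The difference `F(-q,q;1;1-y^r) - F(-p,p;1;1-y)`, which is the numerator of the quotient under
study in the variable `y = x^c`, with `r = d/c`. -/
noncomputable def hypDiff (p q r y : ℝ) : ℝ :=
  ₂F₁ (-q) q 1 (1 - y ^ r) - ₂F₁ (-p) p 1 (1 - y)

lemma hasDerivAt_hypDiff (p q : ℝ) (hr : 0 ≤ r) (hy : y ∈ Ioc 0 1) :
    HasDerivAt (hypDiff p q r)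
      (r * q ^ 2 * (y ^ (r - 1) * ₂F₁ (1 - q) (1 + q) 2 (1 - y ^ r)) -
        p ^ 2 * ₂F₁ (1 - p) (1 + p) 2 (1 - y)) y := by
  have hq := hasDerivAt_ordinaryHypergeometric_neg_self_one_sub_rpow q hr hy
  have hp := hasDerivAt_ordinaryHypergeometric_neg_self_one_sub_rpow p zero_le_one hy
  simp only [rpow_one, sub_self, rpow_zero, one_mul] at hp
  exact hq.sub hp

/-- A region of parameters on which `hypDiff p q r` is strictly convex on `(0,1]`. The last two
fields bound the negative part of its second derivative: `sq_le` compares the two hypergeometric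
functions occurring there, `quadratic_le` their coefficients. -/
structure HypDiffRegion (p q r : ℝ) : Prop where
  p_pos : 0 < p
  p_le_one : p ≤ 1
  q_pos : 0 < q
  one_lt : 1 < r
  mul_sq_le : r * q ^ 2 ≤ p ^ 2
  sq_le : p ^ 2 ≤ 2 * (r - 1) + r * q ^ 2
  quadratic_le : r * q ^ 2 * (2 - r - r * q ^ 2) ≤ p ^ 2 * (1 - p ^ 2)

lemma HypDiffRegion.r_pos (h : HypDiffRegion p q r) : 0 < r := one_pos.trans h.one_lt

lemma HypDiffRegion.q_lt_p (h : HypDiffRegion p q r) : q < p := by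
  refine lt_of_pow_lt_pow_left₀ 2 h.p_pos.le (lt_of_lt_of_le ?_ h.mul_sq_le)
  exact lt_mul_of_one_lt_left (pow_pos h.q_pos 2) h.one_lt

lemma hypDiff_one (p q r : ℝ) : hypDiff p q r 1 = 0 := by simp [hypDiff]

lemma mul_rpow_mul_ordinaryHypergeometric_pos (h : HypDiffRegion p q r) (hy : y ∈ Ioo 0 1) :
    0 < r * q ^ 2 * (y ^ (r - 1) * ((r - 1) * ₂F₁ (1 - q) (1 + q) 2 (1 - y ^ r) -
        r * (1 - q ^ 2) / 2 * ₂F₁ (1 - q) (1 + q) 3 (1 - y ^ r))) +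
      p ^ 2 * (1 - p ^ 2) / 2 * ₂F₁ (1 - p) (1 + p) 3 (1 - y) := by
  have hr₀ := h.r_pos
  have hqp := h.q_lt_p
  obtain ⟨hp, hp₁, hq, hr, -, hpr, hquad⟩ := h
  have hp₂ : 0 ≤ 1 - p ^ 2 := sub_nonneg.2 (pow_le_one₀ hp.le hp₁)
  have hxr : 1 - y ^ r ∈ Ioo 0 1 :=
    ⟨sub_pos.2 (rpow_lt_one hy.1.le hy.2 hr₀), sub_lt_self _ (rpow_pos_of_pos hy.1 r)⟩
  have hAB := ordinaryHypergeometric_add_one_lt (a := 1 - q) (b := 1 + q) (c := 2) (by linarith)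
    (by linarith) two_pos hxr
  have hX := rpow_mul_ordinaryHypergeometric_one_sub_one_add_le hp.le hp₁ hq.le hqp.le hr.le hpr
    (Ioo_subset_Ioc_self hy)
  have hAq := ordinaryHypergeometric_pos (a := 1 - q) (b := 1 + q) (c := 3) (by linarith)
    (by linarith) (by norm_num) (Ioo_subset_Ico_self hxr)
  rw [two_add_one_eq_three] at hAB
  have hY := rpow_pos_of_pos hy.1 (r - 1)
  set A := ₂F₁ (1 - q) (1 + q) 3 (1 - y ^ r)
  set B := ₂F₁ (1 - q) (1 + q) 2 (1 - y ^ r)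
  set Y := y ^ (r - 1)
  set A' := ₂F₁ (1 - p) (1 + p) 3 (1 - y)
  have hB : r * q ^ 2 * (Y * ((r - 1) * A)) < r * q ^ 2 * (Y * ((r - 1) * B)) := by
    have := sub_pos.2 hr
    gcongr
  have hC : r * q ^ 2 * (2 - r - r * q ^ 2) * (Y * A) ≤ p ^ 2 * (1 - p ^ 2) * A' := by
    gcongr
  linear_combination hB + hC / 2

lemma strictConvexOn_hypDiff (h : HypDiffRegion p q r) :
    StrictConvexOn ℝ (Ioc 0 1) (hypDiff p q r) := by
  have hr₀ : 0 ≤ r := h.r_pos.le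
  have hderiv {y : ℝ} (hy : y ∈ Ioc 0 1) := hasDerivAt_hypDiff p q hr₀ hy
  have hderiv₂ {y : ℝ} (hy : y ∈ Ioo 0 1) :=
    ((hasDerivAt_rpow_mul_ordinaryHypergeometric_one_sub_rpow q hr₀
      (Ioo_subset_Ioc_self hy)).const_mul (r * q ^ 2)).sub
    ((hasDerivAt_rpow_mul_ordinaryHypergeometric_one_sub_rpow p zero_le_one
      (Ioo_subset_Ioc_self hy)).const_mul (p ^ 2))
  simp only [rpow_one, sub_self, rpow_zero, one_mul, zero_mul, zero_sub] at hderiv₂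
  refine StrictMonoOn.strictConvexOn_of_deriv (convex_Ioc 0 1)
    (fun y hy => (hderiv hy).continuousAt.continuousWithinAt) ?_
  rw [interior_Ioc]
  refine (strictMonoOn_of_hasDerivWithinAt_pos (convex_Ioo 0 1)
    (fun y hy => (hderiv₂ hy).continuousAt.continuousWithinAt)
    (fun y hy => (hderiv₂ (interior_subset hy)).hasDerivWithinAt) fun y hy => ?_).congr
      fun y hy => (hderiv (Ioo_subset_Ioc_self hy)).deriv.symm
  rw [interior_Ioo] at hy
  refine (div_pos (mul_rpow_mul_ordinaryHypergeometric_pos h hy) hy.1).trans_eq ?_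
  ring

lemma strictAntiOn_hypDiff_div (h : HypDiffRegion p q r) :
    StrictAntiOn (fun y => hypDiff p q r y / (1 - y)) (Ioo 0 1) := by
  intro x hx y hy hxy
  have hsecant := (strictConvexOn_hypDiff h).secant_strict_mono
    (right_mem_Ioc.2 one_pos) (Ioo_subset_Ioc_self hx) (Ioo_subset_Ioc_self hy) hx.2.ne hy.2.ne hxy
  rw [hypDiff_one, sub_zero, sub_zero, ← neg_lt_neg_iff, ← div_neg, ← div_neg, neg_sub,
    neg_sub] at hsecant
  exact hsecant

lemma tendsto_one_sub_rpow_nhdsGT_zero (hr : 0 < r) :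
    Tendsto (fun y : ℝ => 1 - y ^ r) (𝓝[>] 0) (𝓝[<] 1) := by
  refine tendsto_nhdsWithin_iff.2 ⟨?_, ?_⟩
  · have hcont : Continuous fun y : ℝ => 1 - y ^ r :=
      continuous_const.sub (continuous_rpow_const hr.le)
    simpa [zero_rpow hr.ne'] using (hcont.tendsto 0).mono_left nhdsWithin_le_nhds
  · filter_upwards [self_mem_nhdsWithin] with y hy
    exact sub_lt_self _ (rpow_pos_of_pos (mem_Ioi.1 hy) r)

lemma tendsto_hypDiff_div_nhdsGT_zero (hp : p ≠ 0) (hq : q ≠ 0) (hr : 0 < r) :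
    Tendsto (fun y => hypDiff p q r y / (1 - y)) (𝓝[>] 0)
      (𝓝 (sin (π * q) / (π * q) - sin (π * p) / (π * p))) := by
  have h₁ : Tendsto (fun y : ℝ => 1 - y) (𝓝[>] 0) (𝓝[<] 1) := by
    simpa using tendsto_one_sub_rpow_nhdsGT_zero one_pos
  rw [← div_one (_ - _)]
  exact (((tendsto_ordinaryHypergeometric_neg_self hq).comp
    (tendsto_one_sub_rpow_nhdsGT_zero hr)).sub
    ((tendsto_ordinaryHypergeometric_neg_self hp).comp h₁)).div
    (h₁.mono_right nhdsWithin_le_nhds) one_ne_zero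

lemma tendsto_hypDiff_div_nhdsLT_one (p q : ℝ) (hr : 0 ≤ r) :
    Tendsto (fun y => hypDiff p q r y / (1 - y)) (𝓝[<] 1) (𝓝 (p ^ 2 - r * q ^ 2)) := by
  have hderiv := hasDerivAt_hypDiff p q hr (right_mem_Ioc.2 one_pos)
  simp only [one_rpow, sub_self, ordinaryHypergeometric_zero, mul_one] at hderiv
  have hslope := ((hasDerivAt_iff_tendsto_slope.1 hderiv).mono_left
    (nhdsWithin_mono 1 fun y (hy : y < 1) => hy.ne)).neg
  rw [neg_sub] at hslope
  refine hslope.congr fun y => ?_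
  rw [slope_def_field, hypDiff_one, sub_zero, ← div_neg, neg_sub]

lemma image_Ioo_eq_of_strictAntiOn_of_tendsto {g : ℝ → ℝ} {a b l m : ℝ} (hab : a < b)
    (hg : StrictAntiOn g (Ioo a b)) (hc : ContinuousOn g (Ioo a b))
    (hl : Tendsto g (𝓝[>] a) (𝓝 l)) (hm : Tendsto g (𝓝[<] b) (𝓝 m)) :
    g '' Ioo a b = Ioo m l := by
  apply Subset.antisymm
  · rintro _ ⟨x, hx, rfl⟩
    obtain ⟨x₁, hx₁, hx₁'⟩ := exists_between hx.1
    obtain ⟨x₂, hx₂, hx₂'⟩ := exists_between hx.2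
    have h₁ : x₁ ∈ Ioo a b := ⟨hx₁, hx₁'.trans hx.2⟩
    have h₂ : x₂ ∈ Ioo a b := ⟨hx.1.trans hx₂, hx₂'⟩
    constructor
    · refine lt_of_le_of_lt (le_of_tendsto hm ?_) (hg hx h₂ hx₂)
      filter_upwards [Ioo_mem_nhdsLT hx₂'] with t ht
      exact (hg h₂ ⟨h₂.1.trans ht.1, ht.2⟩ ht.1).le
    · refine lt_of_lt_of_le (hg h₁ hx hx₁') (ge_of_tendsto hl ?_)
      filter_upwards [Ioo_mem_nhdsGT hx₁] with t ht
      exact (hg ⟨ht.1, ht.2.trans h₁.2⟩ h₁ ht.2).le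
  · exact isPreconnected_Ioo.intermediate_value_Ioo
      (le_principal_iff.2 (Ioo_mem_nhdsLT hab)) (le_principal_iff.2 (Ioo_mem_nhdsGT hab)) hc hm hl

lemma image_hypDiff_div (h : HypDiffRegion p q r) :
    (fun y => hypDiff p q r y / (1 - y)) '' Ioo 0 1 =
      Ioo (p ^ 2 - r * q ^ 2) (sin (π * q) / (π * q) - sin (π * p) / (π * p)) := by
  refine image_Ioo_eq_of_strictAntiOn_of_tendsto one_pos
    (strictAntiOn_hypDiff_div h) (fun y hy => ?_)
    (tendsto_hypDiff_div_nhdsGT_zero h.p_pos.ne' h.q_pos.ne' h.r_pos)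
    (tendsto_hypDiff_div_nhdsLT_one p q h.r_pos.le)
  exact ((hasDerivAt_hypDiff p q h.r_pos.le (Ioo_subset_Ioc_self hy)).continuousAt.div (by fun_prop)
    (sub_pos.2 hy.2).ne').continuousWithinAt

end HypDiff

section Parameters

variable {p q r ρ s s₀ κ : ℝ}

lemma one_le_quartic_of_le_root (hs : 1 / 3 ≤ s) (hss₀ : s ≤ s₀)
    (hs₀ : 4 * s₀ * (1 - s₀) * (1 + s₀) ^ 2 = 1) : 1 ≤ 4 * s * (1 - s) * (1 + s) ^ 2 := by
  rcases hss₀.eq_or_lt with rfl | hlt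
  · exact hs₀.ge
  let f (t : ℝ) : ℝ := 4 * t * (1 - t) * (1 + t) ^ 2
  have hf₀ : f s₀ = 1 := hs₀
  -- The quartic `f` is concave on `[1/3, ∞)`, so it lies above its chord over `[1/3, s₀]`.
  have hchord : f (1 / 3) * (s₀ - s) + f s₀ * (s - 1 / 3) ≤ f s * (s₀ - 1 / 3) := by
    have hK : 0 ≤ (1 / 3 + s + s₀) + (1 / 9 + s / 3 + s₀ / 3 + s ^ 2 + s * s₀ + s₀ ^ 2) - 1 := by
      nlinarith
    have := mul_nonneg (mul_nonneg (mul_nonneg (sub_nonneg.2 hs) (sub_nonneg.2 hss₀))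
      (sub_nonneg.2 (hs.trans hss₀))) hK
    simp only [f]
    linear_combination 4 * this
  have hf : 1 ≤ f (1 / 3) := by norm_num [f]
  refine le_of_mul_le_mul_right ?_ (sub_pos.2 (hs.trans_lt hlt))
  rw [hf₀] at hchord
  linarith [mul_le_mul_of_nonneg_right hf (sub_nonneg.2 hss₀)]

lemma mul_two_sub_sub_le (hs : 0 < s) (hss₀ : s ≤ s₀)
    (hs₀ : 4 * s₀ * (1 - s₀) * (1 + s₀) ^ 2 = 1) (hρ : 0 ≤ ρ) (hρs : ρ ≤ s)
    (hr : (2 - r) * (s + 1) ≤ 1) : ρ * (2 - r - ρ) ≤ s * (1 - s) := by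
  have hs₁ : 0 < s + 1 := by linarith
  suffices h : ρ * (1 - ρ * (s + 1)) ≤ s * (1 - s) * (s + 1) by
    refine le_of_mul_le_mul_right ?_ hs₁
    linear_combination h + mul_le_mul_of_nonneg_left hr hρ
  -- The vertex of the parabola `ρ ↦ ρ * (1 - ρ * (s + 1))` is `1 / (2 * (s + 1))`.
  rcases le_total (2 * s * (s + 1)) 1 with hvertex | hvertex
  · calc ρ * (1 - ρ * (s + 1)) ≤ s * (1 - s * (s + 1)) := by
          have : (s + ρ) * (s + 1) ≤ 1 := by nlinarith
          linear_combination mul_le_mul_of_nonneg_left this (sub_nonneg.2 hρs)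
      _ ≤ s * (1 - s) * (s + 1) := by linear_combination pow_nonneg hs.le 2
  · have hquartic := one_le_quartic_of_le_root (by nlinarith) hss₀ hs₀
    refine le_of_mul_le_mul_right ?_ (by positivity : 0 < 4 * (s + 1))
    linear_combination hquartic + sq_nonneg (2 * ρ * (s + 1) - 1)

lemma inv_mul_sq_le (hκ : 0 < κ) (hq : 0 ≤ q) (hqp : q ≤ √κ * p) : κ⁻¹ * q ^ 2 ≤ p ^ 2 := by
  rw [inv_mul_le_iff₀ hκ]
  simpa only [mul_pow, sq_sqrt hκ.le] using pow_le_pow_left₀ hq hqp 2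

lemma two_sub_inv_mul_le (hκ : 0 < κ) (hs : 0 ≤ s) (hκs : κ ≤ (s + 1) / (2 * s + 1)) :
    (2 - κ⁻¹) * (s + 1) ≤ 1 := by
  rw [le_div_iff₀ (by positivity), ← le_inv_mul_iff₀ hκ] at hκs
  linear_combination hκs

lemma hypDiffRegion_inv (hs₀ : 4 * s₀ * (1 - s₀) * (1 + s₀) ^ 2 = 1) (hp : 0 < p) (hp₁ : p ≤ 1)
    (hps₀ : p ^ 2 ≤ s₀) (hκ : 0 < κ) (hκp : κ ≤ (p ^ 2 + 1) / (2 * p ^ 2 + 1)) (hq : 0 < q)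
    (hqp : q ≤ √κ * p) : HypDiffRegion p q κ⁻¹ := by
  have hs : 0 < p ^ 2 := by positivity
  have hs₁ : p ^ 2 ≤ 1 := pow_le_one₀ hp.le hp₁
  have hr : (2 - κ⁻¹) * (p ^ 2 + 1) ≤ 1 := two_sub_inv_mul_le hκ hs.le hκp
  have hρ : 0 ≤ κ⁻¹ * q ^ 2 := by positivity
  have hρs : κ⁻¹ * q ^ 2 ≤ p ^ 2 := inv_mul_sq_le hκ hq.le hqp
  exact
    { p_pos := hp
      p_le_one := hp₁
      q_pos := hq
      one_lt := by nlinarith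
      mul_sq_le := hρs
      sq_le := by nlinarith
      quadratic_le := mul_two_sub_sub_le hs hps₀ hs₀ hρ hρs hr }

end Parameters

section HypQuotient

variable {c d p q : ℝ}

lemma image_rpow_Ioo_zero_one (hc : 0 < c) : (fun x : ℝ => x ^ c) '' Ioo 0 1 = Ioo 0 1 := by
  apply Subset.antisymm
  · rintro _ ⟨x, hx, rfl⟩
    exact ⟨rpow_pos_of_pos hx.1 c, rpow_lt_one hx.1.le hx.2 hc⟩
  · intro y hy
    exact ⟨y ^ c⁻¹, ⟨rpow_pos_of_pos hy.1 _, rpow_lt_one hy.1.le hy.2 (inv_pos.2 hc)⟩,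
      rpow_inv_rpow hy.1.le hc.ne'⟩

lemma eqOn_hypDiff_div_comp_rpow (p q d : ℝ) (hc : c ≠ 0) :
    EqOn ((fun y => hypDiff p q (d / c) y / (1 - y)) ∘ fun x => x ^ c)
      (fun x => (hyp (-q) q 1 (1 - x ^ d) - hyp (-p) p 1 (1 - x ^ c)) / (1 - x ^ c))
      (Ioo 0 1) := by
  intro x hx
  simp only [Function.comp_apply, hypDiff, hyp_eq_ordinaryHypergeometric, ← rpow_mul hx.1.le,
    mul_div_cancel₀ _ hc]

lemma strictAntiOn_hyp_sub_hyp_div (hc : 0 < c) (h : HypDiffRegion p q (d / c)) :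
    StrictAntiOn (fun x => (hyp (-q) q 1 (1 - x ^ d) - hyp (-p) p 1 (1 - x ^ c)) / (1 - x ^ c))
      (Ioo 0 1) := by
  refine ((strictAntiOn_hypDiff_div h).comp_strictMonoOn
    (fun x hx y _ hxy => rpow_lt_rpow hx.1.le hxy hc) ?_).congr
      (eqOn_hypDiff_div_comp_rpow p q d hc.ne')
  exact mapsTo_iff_image_subset.2 (image_rpow_Ioo_zero_one hc).subset

lemma image_hyp_sub_hyp_div (hc : 0 < c) (h : HypDiffRegion p q (d / c)) :
    (fun x => (hyp (-q) q 1 (1 - x ^ d) - hyp (-p) p 1 (1 - x ^ c)) / (1 - x ^ c)) '' Ioo 0 1 =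
      Ioo (p ^ 2 - d / c * q ^ 2) (sin (π * q) / (π * q) - sin (π * p) / (π * p)) := by
  rw [← (eqOn_hypDiff_div_comp_rpow p q d hc.ne').image_eq, image_comp,
    image_rpow_Ioo_zero_one hc, image_hypDiff_div h]

end HypQuotient

theorem stmt13 (a₀ a c d δ δ₂ : ℝ)
    (ha₀ : a₀ ∈ Ioo (0:ℝ) 1)
    (hroot : 4 * a₀ * (2 - a₀) * (1 - a₀) ^ 2 * (a₀ ^ 2 - 2 * a₀ + 2) ^ 2 = 1)
    (hmin : ∀ x ∈ Ioo (0:ℝ) 1,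
      4 * x * (2 - x) * (1 - x) ^ 2 * (x ^ 2 - 2 * x + 2) ^ 2 = 1 → a₀ ≤ x)
    (ha : a ∈ Ico a₀ 1)
    (hc : 0 < c) (hd : 0 < d) (hcd : c / d ≤ ((a - 1) ^ 2 + 1) / (2 * (a - 1) ^ 2 + 1))
    (hδ₂ : δ₂ = (Real.sqrt (c / d) - 1) * (1 - a))
    (hδ : δ ∈ Ioc (a - 1) δ₂) :
    let G₁ : ℝ → ℝ := fun x =>
      (hyp (a - 1 - δ) (1 - a + δ) 1 (1 - x ^ d) - hyp (a - 1) (1 - a) 1 (1 - x ^ c)) /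
        (1 - x ^ c)
    let C₃ : ℝ := -(d / c) * (δ ^ 2 + 2 * (1 - a) * δ + (1 - a) ^ 2 * (1 - c / d))
    let C₄ : ℝ := (1 / π) *
      (Real.sin (π * (a - δ)) / (1 - a + δ) - Real.sin (π * a) / (1 - a))
    δ₂ < 0 ∧ 0 ≤ C₃ ∧ StrictAntiOn G₁ (Ioo 0 1) ∧ G₁ '' Ioo 0 1 = Ioo C₃ C₄ := by
  intro G₁ C₃ C₄
  obtain ⟨p, rfl⟩ : ∃ p, a = 1 - p := ⟨1 - a, by ring⟩
  obtain ⟨q, rfl⟩ : ∃ q, δ = q - p := ⟨δ + p, by ring⟩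
  have hp : 0 < p := by linarith [ha.2]
  have hpa₀ : p ≤ 1 - a₀ := by linarith [ha.1]
  have hregion : HypDiffRegion p q (d / c) := by
    rw [sub_sub_cancel_left, neg_sq] at hcd
    rw [← inv_div]
    exact hypDiffRegion_inv (s₀ := (1 - a₀) ^ 2) (by linear_combination hroot) hp
      (by linarith [ha₀.1]) (pow_le_pow_left₀ hp.le hpa₀ 2) (div_pos hc hd) hcd
      (by linarith [hδ.1]) (by linear_combination hδ.2 + hδ₂)
  have hG : G₁ = fun x => (hyp (-q) q 1 (1 - x ^ d) - hyp (-p) p 1 (1 - x ^ c)) / (1 - x ^ c) := by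
    simp [G₁, neg_sub_left]
  have hC₃ : C₃ = p ^ 2 - d / c * q ^ 2 := by
    simp only [C₃]
    field
  have hC₄ : C₄ = sin (π * q) / (π * q) - sin (π * p) / (π * p) := by
    simp [C₄, mul_sub, sin_pi_sub]
    field
  have hδ₂_neg : δ₂ < 0 := by
    have hcd₁ : c / d < 1 := (div_lt_one hd).2 ((one_lt_div hc).1 hregion.one_lt)
    rw [hδ₂, sub_sub_cancel]
    exact mul_neg_of_neg_of_pos (sub_neg.2 ((sqrt_lt' one_pos).2 (by simpa using hcd₁))) hp
  rw [hG, hC₃, hC₄]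
  exact ⟨hδ₂_neg, sub_nonneg.2 hregion.mul_sq_le, strictAntiOn_hyp_sub_hyp_div hc hregion,
    image_hyp_sub_hyp_div hc hregion⟩
end

section
/- Let c, d > 0 with 0 < c/d ≤ 5/6. Then sup{ δ ∈ (−1/2, 0) : F(−1/2, 1/2; 1; 1−x^c) < F(−1/2−δ, 1/2+δ; 1; 1−x^d) for all x ∈ (0,1) } = (√(c/d) − 1)/2. -/
open Real Set Filter Topology

/-!
Write `E_a(t) = F(-a, a; 1; t)`. The hypergeometric equation takes the self-adjoint form
`(t E'(t))' = -a² E(t) / (1 - t)`. For `0 < p ≤ 1` and `r = 1 - (1 - t)^p`, the Picone-type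
expression `W = r E_b'(r) E_a(t) - E_b(r) t E_a'(t)` therefore satisfies
`W' = -(p b² - a²) E_b(r) E_a(t) / (1 - t) - (t r' - r) E_b'(r) E_a'(t)`.
Here `E > 0`, `E' ≤ 0`, and `r ≤ t r'` because `t ↦ t^p` is concave, so `a² < p b²` forces `W < 0`.
Hence `E_b(r) / E_a(t)` decreases from its value `1` at `t = 0`, and `E_b(r) < E_a(t)` on `(0, 1)`.
Conversely, comparing derivatives at `t = 0` shows that this inequality implies `a² ≤ p b²`.
With `p = c / d`, `a = b + δ` and `t = 1 - x^d`, the threshold `a² = p b²` is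
`δ = b (√(c / d) - 1)`.
-/

open Asymptotics

section PowerSeries

variable {𝕜 : Type*} [RCLike 𝕜] {f : ℕ → 𝕜} {k : ℕ} {t : 𝕜}

theorem isBigO_natCast_mul (hf : f =O[atTop] fun n ↦ ((n ^ k : ℕ) : 𝕜)) :
    (fun n ↦ n * f n) =O[atTop] fun n ↦ ((n ^ (k + 1) : ℕ) : 𝕜) := by
  simpa only [pow_succ', Nat.cast_mul] using (isBigO_refl (fun n : ℕ ↦ (n : 𝕜)) atTop).mul hf

theorem isBigO_comp_succ (hf : f =O[atTop] fun n ↦ ((n ^ k : ℕ) : 𝕜)) :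
    (fun n ↦ f (n + 1)) =O[atTop] fun n ↦ ((n ^ k : ℕ) : 𝕜) := by
  have hsucc : (fun n : ℕ ↦ ((n + 1 : ℕ) : 𝕜)) =O[atTop] fun n : ℕ ↦ (n : 𝕜) := by
    refine IsBigO.of_bound 2 ((eventually_ge_atTop 1).mono fun n hn ↦ ?_)
    rw [RCLike.norm_natCast, RCLike.norm_natCast]
    exact_mod_cast (by lia : n + 1 ≤ 2 * n)
  refine (hf.comp_tendsto (tendsto_add_atTop_nat 1)).trans ?_
  simpa only [Function.comp_def, Nat.cast_pow] using hsucc.pow k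

theorem summable_mul_pow_of_isBigO (hf : f =O[atTop] fun n ↦ ((n ^ k : ℕ) : 𝕜)) (ht : ‖t‖ < 1) :
    Summable fun n ↦ f n * t ^ n :=
  (summable_norm_mul_geometric_of_norm_lt_one' ht hf).of_norm

theorem mul_tsum_succ_mul_pow (hf₀ : f 0 = 0) (hs : Summable fun n ↦ f (n + 1) * t ^ n) :
    t * ∑' n, f (n + 1) * t ^ n = ∑' n, f n * t ^ n := by
  have hshift (n : ℕ) : f (n + 1) * t ^ (n + 1) = t * (f (n + 1) * t ^ n) := by ring
  rw [tsum_eq_zero_add' (f := fun n ↦ f n * t ^ n) (by simpa only [hshift] using hs.mul_left t)]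
  simp only [hshift, tsum_mul_left, hf₀, zero_mul, zero_add]

theorem hasDerivAt_tsum_mul_pow (hf : f =O[atTop] fun n ↦ ((n ^ k : ℕ) : 𝕜)) (ht : ‖t‖ < 1) :
    HasDerivAt (fun z ↦ ∑' n, f n * z ^ n) (∑' n, (n + 1 : ℕ) * f (n + 1) * t ^ n) t := by
  obtain ⟨r, htr, hr⟩ := exists_between ht
  have hr₀ : 0 ≤ r := (norm_nonneg t).trans htr.le
  have hbound : Summable fun n ↦ ‖f n * (n * (r : 𝕜) ^ (n - 1))‖ := by
    rw [← summable_nat_add_iff 1]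
    refine (summable_norm_mul_geometric_of_norm_lt_one' (r := (r : 𝕜))
      (by rwa [RCLike.norm_of_nonneg hr₀])
      (isBigO_comp_succ (isBigO_natCast_mul hf))).congr fun n ↦ ?_
    rw [Nat.add_sub_cancel]
    ring_nf
  have hle (n : ℕ) (z : 𝕜) (hz : z ∈ Metric.ball 0 r) :
      ‖f n * (n * z ^ (n - 1))‖ ≤ ‖f n * (n * (r : 𝕜) ^ (n - 1))‖ := by
    simp only [norm_mul, norm_pow, RCLike.norm_of_nonneg hr₀]
    gcongr
    exact (mem_ball_zero_iff.1 hz).le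
  have htr' : t ∈ Metric.ball 0 r := mem_ball_zero_iff.2 htr
  have hderiv := hasDerivAt_tsum_of_isPreconnected hbound Metric.isOpen_ball
    (convex_ball (0 : 𝕜) r).isPreconnected (fun n z _ ↦ (hasDerivAt_pow n z).const_mul (f n))
    hle htr' (summable_mul_pow_of_isBigO hf ht) htr'
  refine hderiv.congr_deriv ?_
  rw [(hbound.of_norm_bounded fun n ↦ hle n t htr').tsum_eq_zero_add]
  simp only [Nat.cast_zero, zero_mul, mul_zero, zero_add, Nat.add_sub_cancel]
  exact tsum_congr fun n ↦ by ring

end PowerSeries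

theorem tsum_mul_pow_neg {f : ℕ → ℝ} {t : ℝ} (hf : ∀ n, f n ≤ 0) (hf₀ : f 0 < 0) (ht : 0 ≤ t)
    (hs : Summable fun n ↦ f n * t ^ n) : ∑' n, f n * t ^ n < 0 := by
  simpa using hs.tsum_lt_tsum (fun n ↦ mul_nonpos_of_nonpos_of_nonneg (hf n) (pow_nonneg ht n))
    (i := 0) (by simpa using hf₀) summable_zero

/-- The coefficients of the power series of `F(-a, a; 1; ·)`, written exactly as they appear in
`hyp` so that `genEllipticE_eq_tsum` holds definitionally. -/
noncomputable def hypCoeff (a : ℝ) (n : ℕ) : ℝ :=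
  (∏ i ∈ Finset.range n, (-a + i)) * (∏ i ∈ Finset.range n, (a + i)) /
    ((∏ i ∈ Finset.range n, ((1 : ℝ) + i)) * (Nat.factorial n))

/-- The function `F(-a, a; 1; ·)`. Up to the factor `π / 2` it is the generalized complete elliptic
integral of the second kind as a function of the squared modulus, the classical one at `a = 1 / 2`.
-/
noncomputable def genEllipticE (a t : ℝ) : ℝ := hyp (-a) a 1 t

section HypCoeff

variable {a : ℝ}

theorem hypCoeff_zero (a : ℝ) : hypCoeff a 0 = 1 := by simp [hypCoeff]

theorem sq_mul_hypCoeff_succ (a : ℝ) (n : ℕ) :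
    ((n + 1 : ℕ) : ℝ) ^ 2 * hypCoeff a (n + 1) = (n ^ 2 - a ^ 2) * hypCoeff a n := by
  have hprod : ∏ i ∈ Finset.range n, ((1 : ℝ) + i) ≠ 0 :=
    Finset.prod_ne_zero_iff.2 fun i _ ↦ by positivity
  have hn : (1 + n : ℝ) ≠ 0 := by positivity
  simp only [hypCoeff, Finset.prod_range_succ, Nat.factorial_succ]
  push_cast
  rw [add_comm (n : ℝ) 1]
  field

theorem hypCoeff_one (a : ℝ) : hypCoeff a 1 = -a ^ 2 := by
  simpa [hypCoeff_zero] using sq_mul_hypCoeff_succ a 0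

theorem abs_hypCoeff_le_one (ha : a ^ 2 ≤ 1) (n : ℕ) : |hypCoeff a n| ≤ 1 := by
  induction n with
  | zero => simp [hypCoeff_zero]
  | succ n ih =>
    have hfactor : |(n : ℝ) ^ 2 - a ^ 2| ≤ ((n + 1 : ℕ) : ℝ) ^ 2 := by
      have hn : (0 : ℝ) ≤ n := n.cast_nonneg
      push_cast
      rw [abs_le]
      constructor <;> nlinarith [hn, sq_nonneg a]
    have hrec := congrArg abs (sq_mul_hypCoeff_succ a n)
    rw [abs_mul, abs_mul, abs_of_nonneg (sq_nonneg _)] at hrec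
    refine le_of_mul_le_mul_left ?_ (by positivity : 0 < ((n + 1 : ℕ) : ℝ) ^ 2)
    rw [hrec]
    exact mul_le_mul hfactor ih (abs_nonneg _) (sq_nonneg _)

theorem isBigO_hypCoeff (ha : a ^ 2 ≤ 1) :
    hypCoeff a =O[atTop] fun n ↦ ((n ^ 0 : ℕ) : ℝ) :=
  isBigO_of_le _ fun n ↦ by simpa using abs_hypCoeff_le_one ha n

theorem hypCoeff_succ_nonpos (ha : a ^ 2 ≤ 1) (n : ℕ) : hypCoeff a (n + 1) ≤ 0 := by
  induction n with
  | zero => simpa [hypCoeff_one] using sq_nonneg a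
  | succ n ih =>
    have hfactor : 0 ≤ ((n + 1 : ℕ) : ℝ) ^ 2 - a ^ 2 := by
      push_cast
      nlinarith [(n.cast_nonneg : (0 : ℝ) ≤ n)]
    have hrec := mul_nonpos_of_nonneg_of_nonpos hfactor ih
    rw [← sq_mul_hypCoeff_succ a (n + 1)] at hrec
    exact nonpos_of_mul_nonpos_right hrec (by positivity)

end HypCoeff

section GenEllipticE

variable {a t : ℝ}

theorem genEllipticE_eq_tsum (a : ℝ) : genEllipticE a = fun t ↦ ∑' n, hypCoeff a n * t ^ n := rfl

theorem genEllipticE_zero_left (t : ℝ) : genEllipticE 0 t = 1 := by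
  simp only [genEllipticE_eq_tsum]
  rw [tsum_eq_single 0 fun n hn ↦ by
    simp [hypCoeff, Finset.prod_eq_zero (Finset.mem_range.2 (Nat.pos_of_ne_zero hn))]]
  simp [hypCoeff_zero]

theorem genEllipticE_zero_right (a : ℝ) : genEllipticE a 0 = 1 := by
  simp only [genEllipticE_eq_tsum]
  rw [tsum_eq_single 0 fun n hn ↦ by simp [hn]]
  simp [hypCoeff_zero]

theorem hasDerivAt_genEllipticE (ha : a ^ 2 ≤ 1) (ht : |t| < 1) :
    HasDerivAt (genEllipticE a) (∑' n, (n + 1 : ℕ) * hypCoeff a (n + 1) * t ^ n) t :=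
  hasDerivAt_tsum_mul_pow (isBigO_hypCoeff ha) ht

theorem differentiableAt_genEllipticE (ha : a ^ 2 ≤ 1) (ht : |t| < 1) :
    DifferentiableAt ℝ (genEllipticE a) t :=
  (hasDerivAt_genEllipticE ha ht).differentiableAt

theorem deriv_genEllipticE_zero (ha : a ^ 2 ≤ 1) : deriv (genEllipticE a) 0 = -a ^ 2 := by
  rw [(hasDerivAt_genEllipticE ha (by simp)).deriv, tsum_eq_single 0 fun n hn ↦ by simp [hn]]
  simp [hypCoeff_one]

theorem summable_succ_mul_hypCoeff (ha : a ^ 2 ≤ 1) (ht : |t| < 1) :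
    Summable fun n ↦ (n + 1 : ℕ) * hypCoeff a (n + 1) * t ^ n :=
  summable_mul_pow_of_isBigO (isBigO_comp_succ (isBigO_natCast_mul (isBigO_hypCoeff ha))) ht

theorem summable_succ_sq_mul_hypCoeff (ha : a ^ 2 ≤ 1) (ht : |t| < 1) :
    Summable fun n ↦ ((n + 1 : ℕ) : ℝ) ^ 2 * hypCoeff a (n + 1) * t ^ n := by
  have hf := isBigO_comp_succ (isBigO_natCast_mul (isBigO_natCast_mul (isBigO_hypCoeff ha)))
  simpa only [sq, mul_assoc] using summable_mul_pow_of_isBigO hf ht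

theorem one_sub_mul_tsum_succ_sq_mul_hypCoeff (ha : a ^ 2 ≤ 1) (ht : |t| < 1) :
    (1 - t) * ∑' n, ((n + 1 : ℕ) : ℝ) ^ 2 * hypCoeff a (n + 1) * t ^ n
      = -(a ^ 2 * genEllipticE a t) := by
  have hs := summable_succ_sq_mul_hypCoeff ha ht
  have hsq := isBigO_natCast_mul (isBigO_natCast_mul (isBigO_hypCoeff ha))
  have hs' : Summable fun n : ℕ ↦ (n : ℝ) ^ 2 * hypCoeff a n * t ^ n := by
    simpa only [sq, mul_assoc] using summable_mul_pow_of_isBigO hsq ht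
  rw [one_sub_mul, mul_tsum_succ_mul_pow (f := fun n ↦ (n : ℝ) ^ 2 * hypCoeff a n) (by simp) hs,
    ← hs.tsum_sub hs', genEllipticE_eq_tsum, ← tsum_mul_left, ← tsum_neg]
  refine tsum_congr fun n ↦ ?_
  rw [sq_mul_hypCoeff_succ]
  ring

theorem hasDerivAt_mul_deriv_genEllipticE (ha : a ^ 2 ≤ 1) (ht : |t| < 1) :
    HasDerivAt (fun t ↦ t * deriv (genEllipticE a) t)
      (-(a ^ 2 * genEllipticE a t / (1 - t))) t := by
  have hseries : (fun t ↦ t * deriv (genEllipticE a) t)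
      =ᶠ[𝓝 t] fun t ↦ ∑' n, (n * hypCoeff a n) * t ^ n := by
    filter_upwards [continuous_abs.continuousAt.eventually_lt continuousAt_const ht] with s hs
    rw [(hasDerivAt_genEllipticE ha hs).deriv]
    exact mul_tsum_succ_mul_pow (f := fun n ↦ n * hypCoeff a n) (by simp)
      (summable_succ_mul_hypCoeff ha hs)
  refine ((hasDerivAt_tsum_mul_pow (isBigO_natCast_mul (isBigO_hypCoeff ha)) ht).congr_deriv
    ?_).congr_of_eventuallyEq hseries
  have h1t : 1 - t ≠ 0 := (sub_pos.2 (abs_lt.1 ht).2).ne'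
  rw [← neg_div, eq_div_iff h1t, ← one_sub_mul_tsum_succ_sq_mul_hypCoeff ha ht, mul_comm]
  simp only [sq, mul_assoc]

theorem deriv_genEllipticE_nonpos (ha : a ^ 2 ≤ 1) (ht : t ∈ Ico (0 : ℝ) 1) :
    deriv (genEllipticE a) t ≤ 0 := by
  rw [(hasDerivAt_genEllipticE ha ((abs_of_nonneg ht.1).trans_lt ht.2)).deriv]
  exact tsum_nonpos fun n ↦ mul_nonpos_of_nonpos_of_nonneg
    (mul_nonpos_of_nonneg_of_nonpos (Nat.cast_nonneg _) (hypCoeff_succ_nonpos ha n))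
    (pow_nonneg ht.1 n)

theorem genEllipticE_pos (ha : a ^ 2 ≤ 1) (ht : t ∈ Ico (0 : ℝ) 1) : 0 < genEllipticE a t := by
  rcases eq_or_ne a 0 with rfl | ha₀
  · simp [genEllipticE_zero_left]
  have ht' : |t| < 1 := (abs_of_nonneg ht.1).trans_lt ht.2
  have hsum : ∑' n, ((n + 1 : ℕ) : ℝ) ^ 2 * hypCoeff a (n + 1) * t ^ n < 0 := by
    refine tsum_mul_pow_neg (fun n ↦ ?_) ?_ ht.1 (summable_succ_sq_mul_hypCoeff ha ht')
    · exact mul_nonpos_of_nonneg_of_nonpos (by positivity) (hypCoeff_succ_nonpos ha n)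
    · simpa [hypCoeff_one] using sq_pos_of_ne_zero ha₀
  have hode := mul_neg_of_pos_of_neg (sub_pos.2 ht.2) hsum
  rw [one_sub_mul_tsum_succ_sq_mul_hypCoeff ha ht', neg_lt_zero] at hode
  exact pos_of_mul_pos_right hode (sq_nonneg a)

end GenEllipticE

section Substitution

variable {p t : ℝ}

theorem one_sub_rpow_mem_Ico_s17 (hp : 0 ≤ p) (ht : t ∈ Ico (0 : ℝ) 1) :
    1 - (1 - t) ^ p ∈ Ico (0 : ℝ) 1 :=
  ⟨sub_nonneg.2 (rpow_le_one (sub_pos.2 ht.2).le (sub_le_self 1 ht.1) hp),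
    sub_lt_self 1 (rpow_pos_of_pos (sub_pos.2 ht.2) p)⟩

theorem hasDerivAt_one_sub_one_sub_rpow (p : ℝ) (ht : t < 1) :
    HasDerivAt (fun t : ℝ ↦ 1 - (1 - t) ^ p) (p * (1 - t) ^ (p - 1)) t := by
  have h := (((hasDerivAt_id t).const_sub 1).rpow_const (p := p)
    (Or.inl (sub_pos.2 ht).ne')).const_sub 1
  exact h.congr_deriv (by simp)

theorem one_sub_one_sub_rpow_le (hp₀ : 0 ≤ p) (hp₁ : p ≤ 1) (ht : t ∈ Ico (0 : ℝ) 1) :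
    1 - (1 - t) ^ p ≤ t * (p * (1 - t) ^ (p - 1)) := by
  have hy : 0 < 1 - t := sub_pos.2 ht.2
  have hbernoulli : (1 + t / (1 - t)) ^ p ≤ 1 + p * (t / (1 - t)) :=
    rpow_one_add_le_one_add_mul_self (by linarith [div_nonneg ht.1 hy.le]) hp₀ hp₁
  have hinv : 1 + t / (1 - t) = (1 - t)⁻¹ := by field
  rw [hinv, inv_rpow hy.le, inv_le_iff_one_le_mul₀ (rpow_pos_of_pos hy p)] at hbernoulli
  rw [rpow_sub_one hy.ne']
  calc 1 - (1 - t) ^ p ≤ (1 + p * (t / (1 - t))) * (1 - t) ^ p - (1 - t) ^ p := by gcongr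
    _ = t * (p * ((1 - t) ^ p / (1 - t))) := by ring

theorem forall_one_sub_rpow_iff {c d : ℝ} (hd : 0 < d) (P : ℝ → ℝ → Prop) :
    (∀ x ∈ Ioo (0 : ℝ) 1, P (1 - x ^ c) (1 - x ^ d)) ↔
      ∀ t ∈ Ioo (0 : ℝ) 1, P (1 - (1 - t) ^ (c / d)) t := by
  constructor
  · intro h t ht
    have hy : 0 < 1 - t := sub_pos.2 ht.2
    have hx := h ((1 - t) ^ d⁻¹)
      ⟨rpow_pos_of_pos hy _, rpow_lt_one hy.le (sub_lt_self 1 ht.1) (inv_pos.2 hd)⟩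
    rwa [← rpow_mul hy.le, ← rpow_mul hy.le, inv_mul_cancel₀ hd.ne', rpow_one, sub_sub_cancel,
      ← div_eq_inv_mul] at hx
  · intro h x hx
    have ht := h (1 - x ^ d)
      ⟨sub_pos.2 (rpow_lt_one hx.1.le hx.2 hd), sub_lt_self 1 (rpow_pos_of_pos hx.1 d)⟩
    rwa [sub_sub_cancel, ← rpow_mul hx.1.le, mul_div_cancel₀ c hd.ne'] at ht

end Substitution

theorem deriv_le_deriv_of_eventually_le_nhdsGT {f g : ℝ → ℝ} {f' g' x : ℝ}
    (hf : HasDerivAt f f' x) (hg : HasDerivAt g g' x) (hx : f x = g x)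
    (hfg : ∀ᶠ y in 𝓝[>] x, f y ≤ g y) : f' ≤ g' := by
  refine le_of_tendsto_of_tendsto (hasDerivWithinAt_iff_tendsto_slope' self_notMem_Ioi |>.1
    hf.hasDerivWithinAt) (hasDerivWithinAt_iff_tendsto_slope' self_notMem_Ioi |>.1
    hg.hasDerivWithinAt) ?_
  filter_upwards [hfg, self_mem_nhdsWithin] with y hy hxy
  rw [slope_def_field, slope_def_field, hx]
  have : 0 ≤ y - x := (sub_pos.2 hxy).le
  gcongr

section Comparison

variable {a b p t : ℝ}

/-- The Picone-type Wronskian of `t ↦ F(-b, b; 1; r)`, where `r = 1 - (1 - t)^p`, and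
`F(-a, a; 1; ·)`. The usual derivative `u'` is replaced by `t u'` for the second function and by
`r F'(-b, b; 1; r)` for the first, in accordance with the self-adjoint form of their equations. -/
noncomputable def genEllipticWronskian (a b p t : ℝ) : ℝ :=
  (1 - (1 - t) ^ p) * deriv (genEllipticE b) (1 - (1 - t) ^ p) * genEllipticE a t
    - genEllipticE b (1 - (1 - t) ^ p) * (t * deriv (genEllipticE a) t)

theorem hasDerivAt_genEllipticE_one_sub_rpow (hb : b ^ 2 ≤ 1) (hp : 0 ≤ p)
    (ht : t ∈ Ico (0 : ℝ) 1) :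
    HasDerivAt (fun t ↦ genEllipticE b (1 - (1 - t) ^ p))
      (deriv (genEllipticE b) (1 - (1 - t) ^ p) * (p * (1 - t) ^ (p - 1))) t := by
  have hr := one_sub_rpow_mem_Ico_s17 hp ht
  exact (differentiableAt_genEllipticE hb ((abs_of_nonneg hr.1).trans_lt hr.2)).hasDerivAt.comp
    t (hasDerivAt_one_sub_one_sub_rpow p ht.2)

theorem hasDerivAt_genEllipticWronskian (ha : a ^ 2 ≤ 1) (hb : b ^ 2 ≤ 1) (hp : 0 ≤ p)
    (ht : t ∈ Ico (0 : ℝ) 1) :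
    HasDerivAt (genEllipticWronskian a b p)
      (-((p * b ^ 2 - a ^ 2) *
          (genEllipticE b (1 - (1 - t) ^ p) * genEllipticE a t / (1 - t))) -
        (t * (p * (1 - t) ^ (p - 1)) - (1 - (1 - t) ^ p)) *
          (deriv (genEllipticE b) (1 - (1 - t) ^ p) * deriv (genEllipticE a) t)) t := by
  have ht' : |t| < 1 := (abs_of_nonneg ht.1).trans_lt ht.2
  have hr := one_sub_rpow_mem_Ico_s17 hp ht
  have hr' : |1 - (1 - t) ^ p| < 1 := (abs_of_nonneg hr.1).trans_lt hr.2
  have hflux := (hasDerivAt_mul_deriv_genEllipticE hb hr').comp t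
    (hasDerivAt_one_sub_one_sub_rpow p ht.2)
  refine ((hflux.mul (differentiableAt_genEllipticE ha ht').hasDerivAt).sub
    ((hasDerivAt_genEllipticE_one_sub_rpow hb hp ht).mul
      (hasDerivAt_mul_deriv_genEllipticE ha ht'))).congr_deriv ?_
  have hy : 0 < 1 - t := sub_pos.2 ht.2
  have : (1 - t) ^ p ≠ 0 := (rpow_pos_of_pos hy p).ne'
  simp only [Function.comp_apply, sub_sub_cancel, rpow_sub_one hy.ne']
  field

theorem genEllipticWronskian_neg (hb : b ^ 2 ≤ 1) (hp₀ : 0 ≤ p) (hp₁ : p ≤ 1)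
    (hab : a ^ 2 < p * b ^ 2) (ht : t ∈ Ioo (0 : ℝ) 1) : genEllipticWronskian a b p t < 0 := by
  have ha : a ^ 2 ≤ 1 := hab.le.trans (mul_le_one₀ hp₁ (sq_nonneg b) hb)
  have hanti : StrictAntiOn (genEllipticWronskian a b p) (Ico 0 1) := by
    refine strictAntiOn_of_deriv_neg (convex_Ico 0 1) (fun s hs ↦
      (hasDerivAt_genEllipticWronskian ha hb hp₀ hs).continuousAt.continuousWithinAt) fun s hs ↦ ?_
    rw [interior_Ico] at hs
    have hs' := Ioo_subset_Ico_self hs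
    have hr := one_sub_rpow_mem_Ico_s17 hp₀ hs'
    rw [(hasDerivAt_genEllipticWronskian ha hb hp₀ hs').deriv]
    have hE : 0 < genEllipticE b (1 - (1 - s) ^ p) * genEllipticE a s / (1 - s) :=
      div_pos (mul_pos (genEllipticE_pos hb hr) (genEllipticE_pos ha hs')) (sub_pos.2 hs.2)
    have hE' : 0 ≤ deriv (genEllipticE b) (1 - (1 - s) ^ p) * deriv (genEllipticE a) s :=
      mul_nonneg_of_nonpos_of_nonpos (deriv_genEllipticE_nonpos hb hr)
        (deriv_genEllipticE_nonpos ha hs')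
    have hconcave := mul_nonneg (sub_nonneg.2 (one_sub_one_sub_rpow_le hp₀ hp₁ hs')) hE'
    linarith [mul_pos (sub_pos.2 hab) hE]
  simpa [genEllipticWronskian] using
    hanti (left_mem_Ico.2 one_pos) (Ioo_subset_Ico_self ht) ht.1

theorem genEllipticE_one_sub_rpow_lt (hb : b ^ 2 ≤ 1) (hp₀ : 0 ≤ p) (hp₁ : p ≤ 1)
    (hab : a ^ 2 < p * b ^ 2) (ht : t ∈ Ioo (0 : ℝ) 1) :
    genEllipticE b (1 - (1 - t) ^ p) < genEllipticE a t := by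
  have ha : a ^ 2 ≤ 1 := hab.le.trans (mul_le_one₀ hp₁ (sq_nonneg b) hb)
  have hquot (s : ℝ) (hs : s ∈ Ico (0 : ℝ) 1) :=
    (hasDerivAt_genEllipticE_one_sub_rpow hb hp₀ hs).div (differentiableAt_genEllipticE ha
      ((abs_of_nonneg hs.1).trans_lt hs.2)).hasDerivAt (genEllipticE_pos ha hs).ne'
  have hanti : StrictAntiOn (fun s ↦ genEllipticE b (1 - (1 - s) ^ p) / genEllipticE a s)
      (Ico 0 1) := by
    refine strictAntiOn_of_deriv_neg (convex_Ico 0 1)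
      (fun s hs ↦ (hquot s hs).continuousAt.continuousWithinAt) fun s hs ↦ ?_
    rw [interior_Ico] at hs
    have hs' := Ioo_subset_Ico_self hs
    have hpos := genEllipticE_pos ha hs'
    have hnonpos := mul_nonpos_of_nonpos_of_nonneg
      (deriv_genEllipticE_nonpos hb (one_sub_rpow_mem_Ico_s17 hp₀ hs')) hpos.le
    have hconcave := mul_le_mul_of_nonpos_right (one_sub_one_sub_rpow_le hp₀ hp₁ hs') hnonpos
    have hW := genEllipticWronskian_neg hb hp₀ hp₁ hab hs
    rw [genEllipticWronskian] at hW
    refine ((hquot s hs').deriv).trans_lt (div_neg_of_neg_of_pos ?_ (pow_pos hpos 2))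
    exact neg_of_mul_neg_right (by linarith) hs.1.le
  have hlt := hanti (left_mem_Ico.2 one_pos) (Ioo_subset_Ico_self ht) ht.1
  simp only [sub_zero, one_rpow, sub_self, genEllipticE_zero_right, div_one] at hlt
  rwa [div_lt_one (genEllipticE_pos ha (Ioo_subset_Ico_self ht))] at hlt

theorem sq_le_mul_sq_of_genEllipticE_one_sub_rpow_le (ha : a ^ 2 ≤ 1) (hb : b ^ 2 ≤ 1) (hp : 0 ≤ p)
    (h : ∀ᶠ t in 𝓝[>] 0, genEllipticE b (1 - (1 - t) ^ p) ≤ genEllipticE a t) :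
    a ^ 2 ≤ p * b ^ 2 := by
  have hderiv := deriv_le_deriv_of_eventually_le_nhdsGT
    (hasDerivAt_genEllipticE_one_sub_rpow hb hp (left_mem_Ico.2 one_pos))
    (differentiableAt_genEllipticE ha (by simp)).hasDerivAt (by simp [genEllipticE_zero_right]) h
  simp only [sub_zero, one_rpow, sub_self, deriv_genEllipticE_zero, ha, hb] at hderiv
  linarith

end Comparison

theorem stmt17_general {b c d : ℝ} (hb₀ : 0 < b) (hb₁ : b ≤ 1) (hc : 0 < c) (hcd : c ≤ d) :
    IsLUB {δ : ℝ | δ ∈ Ioo (-b) 0 ∧ ∀ x ∈ Ioo (0 : ℝ) 1,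
      hyp (-b) b 1 (1 - x ^ c) < hyp (-b - δ) (b + δ) 1 (1 - x ^ d)} (b * (√(c / d) - 1)) := by
  have hd : 0 < d := hc.trans_le hcd
  have hp₀ : 0 < c / d := div_pos hc hd
  have hp₁ : c / d ≤ 1 := (div_le_one hd).2 hcd
  have hb : b ^ 2 ≤ 1 := pow_le_one₀ hb₀.le hb₁
  have hset (δ : ℝ) : (∀ x ∈ Ioo (0 : ℝ) 1, hyp (-b) b 1 (1 - x ^ c) <
      hyp (-b - δ) (b + δ) 1 (1 - x ^ d)) ↔ ∀ t ∈ Ioo (0 : ℝ) 1,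
      genEllipticE b (1 - (1 - t) ^ (c / d)) < genEllipticE (b + δ) t := by
    rw [← neg_add']
    exact forall_one_sub_rpow_iff hd fun r t ↦ genEllipticE b r < genEllipticE (b + δ) t
  have hthreshold : c / d * b ^ 2 = (b * √(c / d)) ^ 2 := by
    rw [mul_pow, sq_sqrt hp₀.le, mul_comm]
  have hsqrt₀ : 0 < b * √(c / d) := mul_pos hb₀ (sqrt_pos.2 hp₀)
  have hsqrt₁ : b * √(c / d) ≤ b := mul_le_of_le_one_right hb₀.le (sqrt_le_one.2 hp₁)
  simp only [hset]
  refine (isLUB_Ioo (by linarith : -b < b * (√(c / d) - 1))).of_subset_of_superset isLUB_Iic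
    (fun δ hδ ↦ ?_) fun δ hδ ↦ ?_
  · refine ⟨⟨hδ.1, by linarith [hδ.2]⟩, fun t ht ↦ ?_⟩
    refine genEllipticE_one_sub_rpow_lt hb hp₀.le hp₁ ?_ ht
    rw [hthreshold]
    exact pow_lt_pow_left₀ (by linarith [hδ.2]) (by linarith [hδ.1]) two_ne_zero
  · have ha : (b + δ) ^ 2 ≤ 1 := pow_le_one₀ (by linarith [hδ.1.1]) (by linarith [hδ.1.2])
    have hle := sq_le_mul_sq_of_genEllipticE_one_sub_rpow_le ha hb hp₀.le
      (eventually_of_mem (Ioo_mem_nhdsGT one_pos) fun t ht ↦ (hδ.2 t ht).le)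
    rw [hthreshold] at hle
    have := le_of_sq_le_sq hle hsqrt₀.le
    exact mem_Iic.2 (by linarith)

theorem stmt17 (c d : ℝ) (hc : 0 < c) (hd : 0 < d) (hcd : c / d ≤ 5 / 6) :
    sSup {δ : ℝ | δ ∈ Ioo (-(1/2) : ℝ) 0 ∧ ∀ x ∈ Ioo (0:ℝ) 1,
        hyp (-(1/2)) (1/2) 1 (1 - x ^ c) < hyp (-(1/2) - δ) (1/2 + δ) 1 (1 - x ^ d)}
      = (Real.sqrt (c / d) - 1) / 2 := by
  have h := stmt17_general one_half_pos one_half_lt_one.le hc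
    ((div_le_one hd).1 (hcd.trans (by norm_num)))
  exact (h.csSup_eq h.nonempty).trans (by ring)
end
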